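/- arXiv:1610.06878 — 7 statements merged into one kernel-verified Lean document; each statement's English description precedes it below -/
import Mathlib

section
/- Let q be a prime power and m ≥ 1. Let S be the square matrix over ℚ with rows and columns indexed by the vectors of F^m (F the field with q elements), whose (i,j) entry is 1 if i is the zero vector or if ⟨i,j⟩ = 1, and 0 otherwise. Then S is invertible over ℚ, and its inverse is the matrix T given by: T_{0,0} = 1; T_{0,j} = −1/q^{m−1} for every j ≠ 0; T_{i,0} = 0 for every i ≠ 0; and for i ≠ 0 and j ≠ 0, T_{i,j} = 1/q^{m−1} if ⟨i,j⟩ = 1, T_{i,j} = −1/q^{m−1} if ⟨i,j⟩ = 0, and T_{i,j} = 0 otherwise. -/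
open scoped Classical

/-!
The dot product identifies vectors with functionals, so the rows of `S` and the columns of `T` may
be indexed by functionals. The column of `T` at `g ≠ 0` is `([g w = 1] - [g w = 0]) / q ^ (m - 1)`.

If `g` is not a multiple of `f`, some `v` satisfies `f v = 0` and `g v = 1`. Translation by `v`
fixes row `f` of `S` and carries `{g = 0}` onto `{g = 1}`, so the two halves of `(S * T) f g`
cancel. If `g = a • f` with `f ≠ 0` and `a ≠ 0`, row `f` of `S` is supported where `f w = 1`, that
is, inside `{g = a}`; this misses `{g = 0}`, and meets `{g = 1}` only when `a = 1`, in which case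
the sum counts the `q ^ (m - 1)` points of an affine hyperplane.
-/

open Module Finset

section Functionals

variable {K W : Type*} [Field K] [AddCommGroup W] [Module K W]

lemma exists_forall_apply_eq_zero_and_apply_eq_one {ι : Type*} [Finite ι] {f : ι → Dual K W}
    {g : Dual K W} (hg : g ∉ Submodule.span K (Set.range f)) :
    ∃ v, (∀ i, f i v = 0) ∧ g v = 1 := by
  have hker : ¬ ⨅ i, LinearMap.ker (f i) ≤ LinearMap.ker g := mt mem_span_of_iInf_ker_le_ker hg
  obtain ⟨v, hfv, hgv⟩ := SetLike.not_le_iff_exists.mp hker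
  simp only [Submodule.mem_iInf, LinearMap.mem_ker] at hfv hgv
  exact ⟨(g v)⁻¹ • v, fun i ↦ by simp [hfv i], by simp [hgv]⟩

lemma card_filter_apply_eq_of_ne_zero [Fintype K] [Fintype W] {f : Dual K W} (hf : f ≠ 0) (c : K) :
    #{w | f w = c} = Fintype.card K ^ (finrank K W - 1) := by
  have hrange (d : K) : d ∈ Set.range f := LinearMap.surjective hf d
  calc #{w | f w = c}
      = #{w | f w = 0} := AddMonoidHom.card_fiber_eq_of_mem_range f (hrange c) (hrange 0)
    _ = Fintype.card (LinearMap.ker f) := (Fintype.card_subtype _).symm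
    _ = Fintype.card K ^ finrank K (LinearMap.ker f) := card_eq_pow_finrank
    _ = Fintype.card K ^ (finrank K W - 1) := by
      rw [← Dual.finrank_ker_add_one_of_ne_zero hf, Nat.add_sub_cancel]

end Functionals

lemma sum_mul_sub_translate_eq_zero {G R : Type*} [AddGroup G] [Fintype G] [NonUnitalNonAssocRing R]
    {φ : G → R} {v : G} (hφ : Function.Periodic φ v) (ψ : G → R) :
    ∑ w, φ w * (ψ w - ψ (w + v)) = 0 := by
  have htranslate : ∑ w, φ w * ψ (w + v) = ∑ w, φ w * ψ w := by
    rw [← Equiv.sum_comp (Equiv.addRight v) fun w ↦ φ w * ψ w]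
    simp only [Equiv.coe_addRight, hφ _]
  simp only [mul_sub, sum_sub_distrib, htranslate, sub_self]

section LevelMatrices

variable (K W R : Type*) [Field K] [AddCommGroup W] [Module K W]

/-- The incidence matrix between functionals `f` and vectors `w` for the relation `f w = 1`, with
the row of the zero functional, which would vanish, replaced by ones. It is the matrix `S` of the
theorem, freed of coordinates. -/
noncomputable def unitLevelMatrix [Zero R] [One R] : Matrix (Dual K W) W R :=
  .of fun f w ↦ if f = 0 ∨ f w = 1 then 1 else 0

variable [DivisionRing R] [Fintype K]

/-- The matrix `T` of the theorem, freed of coordinates: the inverse of `unitLevelMatrix`. Its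
columns at `f ≠ 0` are written as differences of the indicators of the level sets `f = 1` and
`f = 0`; the entries at `w = 0` need no separate case there. -/
noncomputable def unitLevelMatrixInv : Matrix W (Dual K W) R :=
  .of fun w f ↦
    if f = 0 then if w = 0 then 1 else 0
    else 1 / (Fintype.card K : R) ^ (finrank K W - 1) *
      ((if f w = 1 then 1 else 0) - if f w = 0 then 1 else 0)

variable {K W R} [Fintype W]

lemma unitLevelMatrix_mul_inv_apply_zero (f : Dual K W) :
    (unitLevelMatrix K W R * unitLevelMatrixInv K W R) f 0 = if f = 0 then 1 else 0 := by
  simp [Matrix.mul_apply, unitLevelMatrix, unitLevelMatrixInv]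

lemma unitLevelMatrix_mul_inv_apply_of_notMem_span {f g : Dual K W}
    (hg : g ∉ Submodule.span K {f}) :
    (unitLevelMatrix K W R * unitLevelMatrixInv K W R) f g = 0 := by
  have hg₀ : g ≠ 0 := by rintro rfl; exact hg (zero_mem _)
  obtain ⟨v, hfv, hgv⟩ : ∃ v, f v = 0 ∧ g v = 1 := by
    simpa using exists_forall_apply_eq_zero_and_apply_eq_one (f := fun _ : Unit ↦ f)
      (by rwa [Set.range_const])
  have hrow : Function.Periodic (unitLevelMatrix K W R f) v := fun w ↦ by
    simp [unitLevelMatrix, hfv]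
  let ψ (w : W) : R :=
    1 / (Fintype.card K : R) ^ (finrank K W - 1) * if g w = 1 then 1 else 0
  have hcolumn (w : W) : unitLevelMatrixInv K W R w g = ψ w - ψ (w + v) := by
    simp [unitLevelMatrixInv, ψ, hg₀, hgv, mul_sub]
  simp only [Matrix.mul_apply, hcolumn, sum_mul_sub_translate_eq_zero hrow ψ]

lemma unitLevelMatrix_mul_inv_apply_smul (hK : (Fintype.card K : R) ≠ 0) {f : Dual K W}
    (hf : f ≠ 0) {a : K} (ha : a ≠ 0) :
    (unitLevelMatrix K W R * unitLevelMatrixInv K W R) f (a • f) = if a = 1 then 1 else 0 := by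
  set N := Fintype.card K ^ (finrank K W - 1) with hN
  have hN₀ : (N : R) ≠ 0 := by
    rw [hN, Nat.cast_pow]
    exact pow_ne_zero _ hK
  have hterm (w : W) : unitLevelMatrix K W R f w * unitLevelMatrixInv K W R w (a • f) =
      if f w = 1 then (if a = 1 then 1 / (N : R) else 0) else 0 := by
    by_cases hw : f w = 1 <;> simp [unitLevelMatrix, unitLevelMatrixInv, hf, ha, hw, hN]
  calc (unitLevelMatrix K W R * unitLevelMatrixInv K W R) f (a • f)
      = ∑ w with f w = 1, if a = 1 then 1 / (N : R) else 0 := by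
        rw [Matrix.mul_apply, sum_filter]
        exact sum_congr rfl fun w _ ↦ hterm w
    _ = N * if a = 1 then 1 / (N : R) else 0 := by
        rw [sum_const, card_filter_apply_eq_of_ne_zero hf, nsmul_eq_mul]
    _ = if a = 1 then 1 else 0 := by
        rw [mul_ite, mul_one_div_cancel hN₀, mul_zero]

theorem unitLevelMatrix_mul_inv (hK : (Fintype.card K : R) ≠ 0) :
    unitLevelMatrix K W R * unitLevelMatrixInv K W R = 1 := by
  ext f g
  rw [Matrix.one_apply]
  by_cases hg : g = 0
  · rw [hg, unitLevelMatrix_mul_inv_apply_zero]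
  by_cases hspan : g ∈ Submodule.span K {f}
  · obtain ⟨a, rfl⟩ := Submodule.mem_span_singleton.mp hspan
    obtain ⟨ha, hf⟩ := smul_ne_zero_iff.mp hg
    have hdiag : f = a • f ↔ a = 1 := by
      rw [eq_comm, ← (smul_left_injective K hf).eq_iff, one_smul]
    rw [unitLevelMatrix_mul_inv_apply_smul hK hf ha]
    simp only [hdiag]
  · have hne : f ≠ g := by
      rintro rfl
      exact hspan (Submodule.mem_span_singleton_self f)
    rw [unitLevelMatrix_mul_inv_apply_of_notMem_span hspan, if_neg hne]

end LevelMatrices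

theorem statement2_general {K V R : Type*} [Field K] [Fintype K] [AddCommGroup V] [Module K V]
    [Fintype V] [DecidableEq V] [DivisionRing R] (hK : (Fintype.card K : R) ≠ 0)
    (B : LinearMap.BilinForm K V) (hB : B.SeparatingLeft) (S T : Matrix V V R)
    (hS : ∀ i j, S i j = if i = 0 ∨ B i j = 1 then 1 else 0)
    (hT00 : T 0 0 = 1)
    (hT0j : ∀ j, j ≠ 0 → T 0 j = -(1 / (Fintype.card K : R) ^ (finrank K V - 1)))
    (hTi0 : ∀ i, i ≠ 0 → T i 0 = 0)
    (hTij : ∀ i j, i ≠ 0 → j ≠ 0 →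
      T i j = if B j i = 1 then 1 / (Fintype.card K : R) ^ (finrank K V - 1)
              else if B j i = 0 then -(1 / (Fintype.card K : R) ^ (finrank K V - 1)) else 0) :
    IsUnit S ∧ S * T = 1 ∧ T * S = 1 := by
  have hinj : Function.Injective B :=
    LinearMap.ker_eq_bot.mp (LinearMap.separatingLeft_iff_ker_eq_bot.mp hB)
  have hBzero (j : V) : B j = 0 ↔ j = 0 := map_eq_zero_iff B hinj
  have hS' : S = (unitLevelMatrix K V R).submatrix B id := by
    ext i j
    simp [hS, unitLevelMatrix, hBzero]
  have hT' : T = (unitLevelMatrixInv K V R).submatrix id B := by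
    ext i j
    by_cases hj : j = 0 <;> by_cases hi : i = 0
    · simp [unitLevelMatrixInv, hi, hj, hT00]
    · simp [unitLevelMatrixInv, hi, hj, hTi0]
    · simp [unitLevelMatrixInv, hi, hj, hT0j, hBzero]
    · by_cases h1 : B j i = 1 <;> by_cases h0 : B j i = 0 <;>
        simp [unitLevelMatrixInv, hi, hj, hTij, hBzero, h1, h0]
  have hST : S * T = 1 := by
    rw [hS', hT', ← Matrix.submatrix_mul _ _ _ _ _ Function.bijective_id,
      unitLevelMatrix_mul_inv hK, Matrix.submatrix_one _ hinj]
  have hTS : T * S = 1 := mul_eq_one_comm.mp hST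
  exact ⟨.of_mul_eq_one T hST, hST, hTS⟩

theorem statement2 (q m : ℕ) (hq : ∃ p k : ℕ, p.Prime ∧ 1 ≤ k ∧ q = p ^ k) (hm : 1 ≤ m)
    (F : Type) [Field F] [Fintype F] (hF : Fintype.card F = q)
    (S T : Matrix (Fin m → F) (Fin m → F) ℚ)
    (hS : ∀ i j, S i j = if i = 0 ∨ ∑ k, i k * j k = 1 then 1 else 0)
    (hT00 : T 0 0 = 1)
    (hT0j : ∀ j, j ≠ 0 → T 0 j = -(1 / (q : ℚ) ^ (m - 1)))
    (hTi0 : ∀ i, i ≠ 0 → T i 0 = 0)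
    (hTij : ∀ i j, i ≠ 0 → j ≠ 0 →
      T i j = if ∑ k, i k * j k = 1 then 1 / (q : ℚ) ^ (m - 1)
              else if ∑ k, i k * j k = 0 then -(1 / (q : ℚ) ^ (m - 1)) else 0) :
    IsUnit S ∧ S * T = 1 ∧ T * S = 1 := by
  subst hF
  exact statement2_general (by simp) (dotProductBilin F F) (fun v ↦ dotProduct_eq_zero v) S T
    (by simpa [dotProduct] using hS) hT00 (by simpa using hT0j) hTi0
    (by simpa [dotProduct, mul_comm] using hTij)
end

section
/- Let p be a prime, r ≥ 1, q = p^r, let F be a field with q elements, let n ≥ 1, let K be a field with q^n elements containing F, and let f ∈ F[x]. Then (p−1)·#{(x,y) ∈ K × K : y^q − y = f(x)} − Σ_{α ∈ F, α ≠ 0} #{(x,y) ∈ K × K : y^p − y = α·f(x)} = (p − q)·q^n, an equality of integers. -/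
open scoped Classical

/-!
Write `℘_F y = y ^ |F| - y`. By the additive form of Hilbert's Theorem 90, `℘_F y = c` has `|F|`
solutions in `K` when `Tr_{K/F} c = 0`, and none otherwise. If `k ⊆ F ⊆ K`, transitivity of the
trace then says that `℘_k y = α c` has as many solutions in `K` as `℘_k z = α Tr_{K/F} c` has in
`F`. As `α` runs over `F`, the latter equations either all read `℘_k z = 0`, or their solution sets
partition `F`. The resulting identity holds for each `c` separately, so summing it over the values
`c = f(x)` gives the theorem.
-/

open Polynomial

lemma card_subtype_prod {A B : Type*} [Fintype A] [Finite B] (P : A → B → Prop) :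
    Nat.card {ab : A × B // P ab.1 ab.2} = ∑ a, Nat.card {b // P a b} := by
  rw [← Nat.card_sigma]
  exact Nat.card_congr (Equiv.subtypeProdEquivSigmaSubtype P)

lemma sum_card_fiber {A B : Type*} [Finite A] [Fintype B] (g : A → B) :
    ∑ b, Nat.card {a // g a = b} = Nat.card A := by
  rw [← Nat.card_sigma]
  exact Nat.card_congr (Equiv.sigmaFiberEquiv g)

section ArtinSchreier

variable (F K : Type*) [Field F] [Fintype F] [Field K] [Algebra F K]

/-- The Artin–Schreier operator `y ↦ y ^ |F| - y` on an extension `K` of the finite field `F`. It is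
bundled as an `F`-linear map so that its fibers can be counted by linear algebra. -/
noncomputable def artinSchreier : K →ₗ[F] K :=
  (FiniteField.frobeniusAlgHom F K).toLinearMap - LinearMap.id

variable {K} in
lemma artinSchreier_apply (y : K) : artinSchreier F K y = y ^ Fintype.card F - y := rfl

lemma ker_artinSchreier : LinearMap.ker (artinSchreier F K) = 1 := by
  ext y
  rw [LinearMap.mem_ker, Submodule.mem_one, artinSchreier_apply]
  constructor
  · intro hy
    have hsplits : (X ^ Fintype.card F - X : F[X]).Splits := by
      rw [splits_iff_card_roots, FiniteField.roots_X_pow_card_sub_X,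
        FiniteField.X_pow_card_sub_X_natDegree_eq F Fintype.one_lt_card]
      rfl
    exact hsplits.mem_range_of_isRoot
      (FiniteField.X_pow_card_sub_X_ne_zero F Fintype.one_lt_card) (by simpa using hy)
  · rintro ⟨a, rfl⟩
    rw [← map_pow, FiniteField.pow_card, sub_self]

lemma finrank_ker_artinSchreier :
    Module.finrank F (LinearMap.ker (artinSchreier F K)) = 1 := by
  rw [ker_artinSchreier, Submodule.one_eq_range,
    LinearMap.finrank_range_of_inj (algebraMap F K).injective, Module.finrank_self]

lemma range_artinSchreier [Finite K] :
    LinearMap.range (artinSchreier F K) = LinearMap.ker (Algebra.trace F K) := by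
  have hle : LinearMap.range (artinSchreier F K) ≤ LinearMap.ker (Algebra.trace F K) := by
    rintro _ ⟨y, rfl⟩
    rw [LinearMap.mem_ker, artinSchreier_apply, map_sub, sub_eq_zero]
    exact Algebra.trace_eq_of_algEquiv (FiniteField.frobeniusAlgEquivOfAlgebraic F K) y
  have htrace : Module.finrank F (LinearMap.range (Algebra.trace F K)) = 1 := by
    rw [LinearMap.range_eq_top.2 (Algebra.trace_surjective F K), finrank_top, Module.finrank_self]
  have hrank : Module.finrank F (LinearMap.range (artinSchreier F K)) =
      Module.finrank F (LinearMap.ker (Algebra.trace F K)) := by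
    have h_artinSchreier := (artinSchreier F K).finrank_range_add_finrank_ker
    have h_trace := (Algebra.trace F K).finrank_range_add_finrank_ker
    rw [finrank_ker_artinSchreier] at h_artinSchreier
    lia
  exact Submodule.eq_of_le_of_finrank_eq hle hrank

variable {K} in
lemma card_artinSchreier_eq [Finite K] (c : K) :
    Nat.card {y // artinSchreier F K y = c} =
      if Algebra.trace F K c = 0 then Fintype.card F else 0 := by
  have hker : Nat.card (LinearMap.ker (artinSchreier F K)) = Fintype.card F := by
    rw [Module.natCard_eq_pow_finrank (K := F), finrank_ker_artinSchreier, pow_one,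
      Nat.card_eq_fintype_card]
  rw [← LinearMap.mem_ker, ← range_artinSchreier, ← hker]
  split_ifs with hc
  · obtain ⟨y, rfl⟩ := hc
    exact Nat.card_congr ((artinSchreier F K).toAddMonoidHom.fiberEquivKer y)
  · have : IsEmpty {y // artinSchreier F K y = c} := ⟨fun y ↦ hc ⟨y, y.2⟩⟩
    exact Nat.card_of_isEmpty

end ArtinSchreier

section Tower

variable (k : Type*) {F K : Type*} [Field k] [Fintype k] [Field F] [Algebra k F]

lemma card_artinSchreier_eq_smul [Finite F] [Field K] [Finite K] [Algebra F K] [Algebra k K]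
    [IsScalarTower k F K] (α : F) (c : K) :
    Nat.card {y // artinSchreier k K y = α • c} =
      Nat.card {z // artinSchreier k F z = α * Algebra.trace F K c} := by
  rw [card_artinSchreier_eq, card_artinSchreier_eq, ← Algebra.trace_trace (S := F), map_smul,
    smul_eq_mul]

variable [Fintype F]

lemma sum_card_artinSchreier_eq_mul (t : F) :
    ∑ α : F, Nat.card {z // artinSchreier k F z = α * t} =
      if t = 0 then Fintype.card F * Fintype.card k else Fintype.card F := by
  split_ifs with ht
  · simp only [ht, mul_zero, card_artinSchreier_eq, map_zero, if_true, Finset.sum_const,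
      Finset.card_univ, smul_eq_mul]
  · calc ∑ α : F, Nat.card {z // artinSchreier k F z = α * t}
        = ∑ β : F, Nat.card {z // artinSchreier k F z = β} :=
          Equiv.sum_comp (Equiv.mulRight₀ t ht) fun β ↦ Nat.card {z // artinSchreier k F z = β}
      _ = Fintype.card F := by rw [sum_card_fiber, Nat.card_eq_fintype_card]

lemma card_artinSchreier_sub_sum_card_smul [Field K] [Finite K] [Algebra F K] [Algebra k K]
    [IsScalarTower k F K] (c : K) :
    ((Fintype.card k : ℤ) - 1) * Nat.card {y // artinSchreier F K y = c} -
        ∑ α : F with α ≠ 0, (Nat.card {y // artinSchreier k K y = α • c} : ℤ) =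
      Fintype.card k - Fintype.card F := by
  have hzero : Nat.card {y // artinSchreier k K y = (0 : F) • c} = Fintype.card k := by
    rw [zero_smul, card_artinSchreier_eq, map_zero, if_pos rfl]
  have hsum : ∑ α : F, (Nat.card {y // artinSchreier k K y = α • c} : ℤ) =
      if Algebra.trace F K c = 0 then Fintype.card F * Fintype.card k else Fintype.card F := by
    simp only [card_artinSchreier_eq_smul]
    exact_mod_cast sum_card_artinSchreier_eq_mul k (Algebra.trace F K c)
  rw [Finset.filter_ne', Finset.sum_erase_eq_sub (Finset.mem_univ 0), hsum, hzero,
    card_artinSchreier_eq]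
  split_ifs <;> push_cast <;> ring

end Tower

theorem statement3_general (k F K S : Type*) [Field k] [Fintype k] [Field F] [Fintype F]
    [Field K] [Finite K] [Algebra k F] [Algebra F K] [Algebra k K] [IsScalarTower k F K]
    [Fintype S] (g : S → K) :
    ((Fintype.card k : ℤ) - 1) *
        (Nat.card {xy : S × K // xy.2 ^ Fintype.card F - xy.2 = g xy.1} : ℤ)
      - ∑ α ∈ Finset.univ.filter (fun α : F ↦ α ≠ 0),
          (Nat.card {xy : S × K //
              xy.2 ^ Fintype.card k - xy.2 = algebraMap F K α * g xy.1} : ℤ)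
      = ((Fintype.card k : ℤ) - Fintype.card F) * Fintype.card S := by
  simp only [← artinSchreier_apply, ← Algebra.smul_def]
  simp only [card_subtype_prod fun x y ↦ artinSchreier F K y = g x,
    fun α : F ↦ card_subtype_prod fun x y ↦ artinSchreier k K y = α • g x, Nat.cast_sum]
  rw [Finset.sum_comm, Finset.mul_sum, ← Finset.sum_sub_distrib]
  simp only [card_artinSchreier_sub_sum_card_smul, Finset.sum_const, Finset.card_univ,
    nsmul_eq_mul, mul_comm]

theorem statement3 (p r : ℕ) (hp : p.Prime) (hr : 1 ≤ r)
    (F : Type) [Field F] [Fintype F] (hF : Fintype.card F = p ^ r)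
    (n : ℕ) (hn : 1 ≤ n)
    (K : Type) [Field K] [Fintype K] [Algebra F K]
    (hK : Fintype.card K = (p ^ r) ^ n)
    (f : Polynomial F) :
    ((p : ℤ) - 1) *
        (Nat.card {xy : K × K // xy.2 ^ (p ^ r) - xy.2 = Polynomial.aeval xy.1 f} : ℤ)
      - ∑ α ∈ Finset.univ.filter (fun α : F => α ≠ 0),
          (Nat.card {xy : K × K //
              xy.2 ^ p - xy.2 = algebraMap F K α * Polynomial.aeval xy.1 f} : ℤ)
      = ((p : ℤ) - (p : ℤ) ^ r) * ((p : ℤ) ^ r) ^ n := by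
  have : Fact p.Prime := ⟨hp⟩
  have : CharP F p := charP_of_card_eq_prime_pow hF
  let _ : Algebra (ZMod p) F := ZMod.algebra F p
  let _ : Algebra (ZMod p) K := Algebra.compHom K (algebraMap (ZMod p) F)
  have : IsScalarTower (ZMod p) F K := .of_algebraMap_eq' rfl
  simpa [hF, hK, ZMod.card] using statement3_general (ZMod p) F K K fun x ↦ aeval x f
end

section
/- Let p be an odd prime, r ≥ 1, q = p^r, let F be a field with q elements, and let 1 ≤ l < p. For c in the prime field F_p ⊆ F, define θ_c : F^l → F^l by (θ_c(t_1,…,t_l))_k = Σ over tuples (ν_1,…,ν_k) of nonnegative integers with ν_1 + 2ν_2 + ⋯ + kν_k = k of c^(m)·∏_{i=1}^{k} t_i^{ν_i}/(ν_i!), where m = ν_1 + ⋯ + ν_k and c^(m) = c(c−1)⋯(c−m+1) is the falling factorial in F (the factorials ν_i! are invertible in F since ν_i ≤ k < p). Then for every n ≥ l coprime-or-not to p and every (t_1,…,t_l) ∈ F^l: if all t_k = 0 then n·I_q(n,0,…,0) = Σ_{d | n, p ∤ d} μ(d)·( F_q(n/d, 0,…,0) − ε_d·q^{n/(pd)} ),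 where ε_d = 1 if pd divides n and ε_d = 0 otherwise; and if (t_1,…,t_l) ≠ (0,…,0) then n·I_q(n,t_1,…,t_l) = Σ_{d | n, p ∤ d} μ(d)·F_q(n/d, θ_{c_d}(t_1,…,t_l)), where c_d ∈ F_p is the multiplicative inverse of the image of d in F_p. -/
open scoped Classical

/-- The `k`-th trace function for the extension of `F_q` of degree `n`:
`T_k(a) = Σ_S ∏_{i ∈ S} a^(q^i)`, sum over `k`-element subsets `S` of `{0,…,n-1}`.
It is identically `0` when `k > n`. -/
noncomputable def traceFn (q n k : ℕ) {K : Type*} [CommRing K] (a : K) : K :=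
  ∑ S ∈ Finset.powersetCard k (Finset.range n), ∏ i ∈ S, a ^ (q ^ i)

/-- The falling factorial `c^(m) = c(c−1)⋯(c−m+1)` in a field. -/
noncomputable def fallingFact {F : Type*} [Field F] (c : F) (m : ℕ) : F :=
  ∏ j ∈ Finset.range m, (c - (j : F))

/-- The map `θ_c : F^l → F^l` whose `k`-th component (for `k` running 1-based through
`1,…,l`) is `Σ_{ν_1 + 2ν_2 + ⋯ + kν_k = k} c^(ν_1+⋯+ν_k) · ∏_i t_i^{ν_i}/(ν_i!)`. -/
noncomputable def theta {F : Type*} [Field F] {l : ℕ} (c : F) (t : Fin l → F) : Fin l → F :=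
  fun k =>
    ∑ ν ∈ (Fintype.piFinset fun _ : Fin (k.1 + 1) => Finset.range (k.1 + 2)).filter
        (fun ν => ∑ i, (i.1 + 1) * ν i = k.1 + 1),
      fallingFact c (∑ i, ν i) *
        ∏ i : Fin (k.1 + 1),
          (t ⟨i.1, lt_of_le_of_lt (Nat.lt_succ_iff.mp i.2) k.2⟩ ^ ν i /
            (Nat.factorial (ν i) : F))

/-- `F_q(m, u)`: the number of elements of the degree-`m` extension `K m` of `F` whose
first `l` trace functions take the prescribed values `u_1,…,u_l`. -/
noncomputable def Fcnt (q l : ℕ) (F : Type) [Field F] (K : ℕ → Type)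
    [∀ m, Field (K m)] [∀ m, Algebra F (K m)] (m : ℕ) (u : Fin l → F) : ℕ :=
  Nat.card {a : K m // ∀ k : Fin l, traceFn q m (k.1 + 1) a = algebraMap F (K m) (u k)}

/-- `I_q(n, t)`: the number of monic irreducible polynomials of degree `n` over `F` whose
coefficient of `x^{n-k}` is `(−1)^k t_k` for `k = 1,…,l`. -/
noncomputable def Icnt (l : ℕ) (F : Type) [Field F] (n : ℕ) (t : Fin l → F) : ℕ :=
  Nat.card {f : Polynomial F // f.Monic ∧ Irreducible f ∧ f.natDegree = n ∧
    ∀ k : Fin l, f.coeff (n - (k.1 + 1)) = (-1) ^ (k.1 + 1) * t k}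

/-! Attach to a monic polynomial `f = ∏ (X - aᵢ)` the class `[f]` of `∏ (1 + aᵢ X)` modulo
`X ^ (l + 1)`, and to `t` the class `[t]` of `1 + t₁ X + ⋯ + t_l X ^ l`. Since `l < p`, both have
`p`-th power `1`. If `a` lies in the extension of degree `m` and has minimal polynomial `f`,
its conjugates `a ^ q ^ i` for `i < m` run `m / deg f` times through the roots of `f`, so `a` has
traces `t` iff `[f] ^ (m / deg f) = [t]`. By the multinomial theorem `[θ_c t] = [t] ^ c`, hence for
`d` prime to `p` and `c = 1 / d` the condition `[f] ^ (n / d / deg f) = [θ_c t]` is equivalent to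
`[f] ^ (n / deg f) = [t]`, which no longer involves `d`. Thus the number of elements of degree
`n / d` with traces `θ_c t` is the sum of `e * N e` over `e ∣ n / d`, where `N e` counts the `f` of
degree `e` with `[f] ^ (n / e) = [t]`.

Möbius inversion restricted to `d` prime to `p` recovers `n * N n` once the `e` with `p ∣ n / e` are
discarded. For these `[f] ^ (n / e) = 1`, so they contribute only when `t = 0`, and then, the
condition on `f` being void, they contribute all elements of the extension of degree `n / (p * d)`.
-/

open Polynomial

section MoebiusInversion

lemma sum_moebius_mul_sum_divisors_of_not_dvd {R : Type*} [Ring R] {p n : ℕ} (hn : 0 < n)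
    {f : ℕ → R} (hf : ∀ e ∈ n.divisors, p ∣ n / e → f e = 0) :
    ∑ d ∈ n.divisors with ¬ p ∣ d,
      (ArithmeticFunction.moebius d : R) * ∑ e ∈ (n / d).divisors, f e = f n := by
  have inversion := ArithmeticFunction.sum_eq_iff_sum_mul_moebius_eq.mp
    (fun _ _ ↦ rfl : ∀ m > 0, ∑ e ∈ m.divisors, f e = ∑ e ∈ m.divisors, f e) n hn
  rw [← inversion, Nat.sum_divisorsAntidiagonal
    fun d m ↦ (ArithmeticFunction.moebius d : R) * ∑ e ∈ m.divisors, f e]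
  refine Finset.sum_filter_of_ne fun d hd hne hpd ↦ hne ?_
  rw [Finset.sum_eq_zero, mul_zero]
  intro e he
  have hdn := Nat.dvd_of_mem_divisors hd
  have hed : d * e ∣ n := (Nat.dvd_div_iff_mul_dvd hdn).mp (Nat.dvd_of_mem_divisors he)
  have hen : e ∣ n := dvd_of_mul_left_dvd hed
  refine hf e (Nat.mem_divisors.mpr ⟨hen, hn.ne'⟩) (hpd.trans ?_)
  rwa [Nat.dvd_div_iff_mul_dvd hen, mul_comm]

lemma filter_dvd_div_divisors_div {p d n : ℕ} (hpd : p.Coprime d) (hd : d ∣ n) :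
    {e ∈ (n / d).divisors | p ∣ n / e} = if p * d ∣ n then (n / (p * d)).divisors else ∅ := by
  rcases eq_or_ne n 0 with rfl | hn
  · simp
  have dvd_iff (e : ℕ) : e ∣ n / d ∧ p ∣ n / e ↔ p * d * e ∣ n := by
    rw [Nat.dvd_div_iff_mul_dvd hd]
    constructor
    · rintro ⟨hde, hp⟩
      have he : e ∣ n := dvd_of_mul_left_dvd hde
      have hd' : d ∣ n / e := by rwa [Nat.dvd_div_iff_mul_dvd he, mul_comm]
      rw [mul_comm, ← Nat.dvd_div_iff_mul_dvd he]
      exact hpd.mul_dvd_of_dvd_of_dvd hp hd'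
    · intro h
      refine ⟨(Dvd.intro_left p (mul_assoc p d e).symm).trans h, ?_⟩
      rw [Nat.dvd_div_iff_mul_dvd (dvd_of_mul_left_dvd h)]
      exact (Dvd.intro d (by ring)).trans h
  ext e
  rw [Finset.mem_filter, Nat.mem_divisors, and_right_comm, dvd_iff]
  split_ifs with h
  · simp [Nat.dvd_div_iff_mul_dvd h, Nat.div_ne_zero_iff_of_dvd hd, Nat.div_ne_zero_iff_of_dvd h,
      hn, ne_zero_of_dvd_ne_zero hn hd, ne_zero_of_dvd_ne_zero hn h]
  · have not_dvd : ¬ p * d * e ∣ n := fun hpde ↦ h (dvd_of_mul_right_dvd hpde)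
    simp only [not_dvd, false_and, Finset.notMem_empty]

end MoebiusInversion

section TruncatedPolynomials

variable {R : Type*} [CommRing R]

lemma mk_X_pow_eq_mk_iff {n : ℕ} {P Q : R[X]} :
    AdjoinRoot.mk (X ^ n) P = AdjoinRoot.mk (X ^ n) Q ↔ ∀ k < n, P.coeff k = Q.coeff k := by
  simp only [AdjoinRoot.mk_eq_mk, X_pow_dvd_iff, coeff_sub, sub_eq_zero]

lemma coeff_zero_pow_eq_one {Q : R[X]} (hQ : Q.coeff 0 = 1) (m : ℕ) : (Q ^ m).coeff 0 = 1 := by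
  rw [← constantCoeff_apply, map_pow, constantCoeff_apply, hQ, one_pow]

lemma mk_X_pow_pow_char_eq_one (p : ℕ) [Fact p.Prime] [CharP R p] {n : ℕ} (hn : n ≤ p) {Q : R[X]}
    (hQ : Q.coeff 0 = 1) : AdjoinRoot.mk (X ^ n) Q ^ p = 1 := by
  have hX : X ∣ Q - 1 := by simp [X_dvd_iff, hQ]
  rw [← map_pow, ← map_one (AdjoinRoot.mk (X ^ n)), AdjoinRoot.mk_eq_mk, ← one_pow p,
    ← sub_pow_char]
  exact (pow_dvd_pow X hn).trans (pow_dvd_pow_of_dvd hX p)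

lemma pow_mul_eq_pow_iff_of_modEq {M : Type*} [Monoid M] {x y : M} {p c d : ℕ} (hx : x ^ p = 1)
    (hy : y ^ p = 1) (hdc : d * c ≡ 1 [MOD p]) : x ^ d = y ↔ x = y ^ c := by
  constructor
  · rintro rfl
    rw [← pow_mul, pow_eq_pow_of_modEq hdc hx, pow_one]
  · rintro rfl
    rw [← pow_mul, mul_comm, pow_eq_pow_of_modEq hdc hy, pow_one]

/-- The polynomial `1 + t₁ X + ⋯ + t_l X ^ l`. Its class modulo `X ^ (l + 1)` encodes the
prescribed values `t₁, …, t_l` of the traces as an element of a monoid. -/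
noncomputable def genPoly {l : ℕ} (t : Fin l → R) : R[X] :=
  1 + ∑ i, C (t i) * X ^ (i.1 + 1)

lemma coeff_zero_genPoly {l : ℕ} (t : Fin l → R) : (genPoly t).coeff 0 = 1 := by
  simp [genPoly, finsetSum_coeff, coeff_X_pow]

lemma coeff_succ_genPoly {l : ℕ} (t : Fin l → R) (k : Fin l) :
    (genPoly t).coeff (k.1 + 1) = t k := by
  simp [genPoly, finsetSum_coeff, coeff_X_pow, coeff_one, ← Fin.ext_iff]

/-- The class of `genPoly t` modulo `X ^ (l + 1)`. -/
noncomputable def genClass {l : ℕ} (t : Fin l → R) : AdjoinRoot (X ^ (l + 1) : R[X]) :=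
  AdjoinRoot.mk _ (genPoly t)

lemma mk_eq_genClass_iff {l : ℕ} {Q : R[X]} (hQ : Q.coeff 0 = 1) {t : Fin l → R} :
    AdjoinRoot.mk _ Q = genClass t ↔ ∀ k : Fin l, Q.coeff (k.1 + 1) = t k := by
  rw [genClass, mk_X_pow_eq_mk_iff, Nat.forall_lt_succ_left, hQ, coeff_zero_genPoly, Fin.forall_iff]
  simp only [true_and]
  exact forall₂_congr fun k hk ↦ by rw [coeff_succ_genPoly t ⟨k, hk⟩]

lemma genClass_eq_one_iff {l : ℕ} {t : Fin l → R} : genClass t = 1 ↔ t = 0 := by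
  rw [← map_one (AdjoinRoot.mk _), eq_comm, mk_eq_genClass_iff coeff_one_zero, funext_iff]
  simp [coeff_one, eq_comm]

lemma genClass_pow_char (p : ℕ) [Fact p.Prime] [CharP R p] {l : ℕ} (hl : l < p) (t : Fin l → R) :
    genClass t ^ p = 1 :=
  mk_X_pow_pow_char_eq_one p hl (coeff_zero_genPoly t)

end TruncatedPolynomials

section Theta

lemma coeff_sum_C_mul_X_pow_pow {R ι : Type*} [CommSemiring R] [DecidableEq ι] (s : Finset ι)
    (a : ι → R) (w : ι → ℕ) (m n : ℕ) :
    ((∑ i ∈ s, C (a i) * X ^ w i) ^ m).coeff n =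
      ∑ ν ∈ s.piAntidiag m with ∑ i ∈ s, w i * ν i = n,
        (Nat.multinomial s ν : R) * ∏ i ∈ s, a i ^ ν i := by
  have monomial_eq (ν : ι → ℕ) : ∏ i ∈ s, (C (a i) * X ^ w i) ^ ν i =
      C (∏ i ∈ s, a i ^ ν i) * X ^ ∑ i ∈ s, w i * ν i := by
    simp only [mul_pow, ← pow_mul, Finset.prod_mul_distrib, Finset.prod_pow_eq_pow_sum, map_prod,
      map_pow]
  rw [Finset.sum_pow_eq_sum_piAntidiag, finsetSum_coeff, Finset.sum_filter]
  refine Finset.sum_congr rfl fun ν _ ↦ ?_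
  rw [monomial_eq, ← C_eq_natCast, coeff_C_mul, coeff_C_mul_X_pow, mul_ite, mul_zero]
  simp only [eq_comm]

/-- The exponents `(ν₁, …, ν_{k+1})` with `ν₁ + 2ν₂ + ⋯ + (k+1)ν_{k+1} = k + 1`, as they index the
sum defining the component of `theta` at `k`. -/
def weightedExponents (k : ℕ) : Finset (Fin (k + 1) → ℕ) :=
  {ν ∈ Fintype.piFinset fun _ ↦ Finset.range (k + 2) | ∑ i, (i.1 + 1) * ν i = k + 1}

lemma mem_weightedExponents {k : ℕ} {ν : Fin (k + 1) → ℕ} :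
    ν ∈ weightedExponents k ↔ ∑ i, (i.1 + 1) * ν i = k + 1 := by
  simp only [weightedExponents, Finset.mem_filter, Fintype.mem_piFinset, Finset.mem_range,
    and_iff_right_iff_imp]
  intro hν i
  calc ν i ≤ (i.1 + 1) * ν i := Nat.le_mul_of_pos_left _ i.1.succ_pos
    _ ≤ ∑ j : Fin (k + 1), (j.1 + 1) * ν j :=
        Finset.single_le_sum_of_canonicallyOrdered (f := fun j : Fin (k + 1) ↦ (j.1 + 1) * ν j)
          (Finset.mem_univ i)
    _ < k + 2 := by omega

lemma coeff_succ_genPoly_pow {R : Type*} [CommRing R] {k : ℕ} (t : Fin (k + 1) → R) (c : ℕ) :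
    (genPoly t ^ c).coeff (k + 1) =
      ∑ ν ∈ weightedExponents k,
        (c.choose (∑ i, ν i) * Nat.multinomial Finset.univ ν : R) * ∏ i, t i ^ ν i := by
  have fiber_eq (m : ℕ) : {ν ∈ weightedExponents k | ∑ i, ν i = m} =
      {ν ∈ (Finset.univ : Finset (Fin (k + 1))).piAntidiag m |
        ∑ i : Fin (k + 1), (i.1 + 1) * ν i = k + 1} := by
    ext ν
    simp [mem_weightedExponents, and_comm]
  have sum_mem_of_ne_zero (ν : Fin (k + 1) → ℕ) (hν : (c.choose (∑ i, ν i) *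
      Nat.multinomial Finset.univ ν : R) * ∏ i, t i ^ ν i ≠ 0) :
      ∑ i, ν i ∈ Finset.range (c + 1) := by
    contrapose! hν
    rw [Nat.choose_eq_zero_of_lt (by simpa using hν), Nat.cast_zero, zero_mul, zero_mul]
  rw [← Finset.sum_filter_of_ne fun ν _ ↦ sum_mem_of_ne_zero ν,
    ← Finset.sum_fiberwise_eq_sum_filter, genPoly, add_comm, add_pow, finsetSum_coeff]
  refine Finset.sum_congr rfl fun m _ ↦ ?_
  rw [one_pow, mul_one, ← C_eq_natCast, coeff_mul_C, coeff_sum_C_mul_X_pow_pow, ← fiber_eq,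
    Finset.sum_mul]
  refine Finset.sum_congr rfl fun ν hν ↦ ?_
  rw [(Finset.mem_filter.mp hν).2]
  ring

variable {F : Type*} [Field F]

lemma fallingFact_natCast (c m : ℕ) : fallingFact (c : F) m = c.descFactorial m := by
  rw [fallingFact, ← descPochhammer_eval_eq_prod_range, descPochhammer_eval_eq_descFactorial]

lemma fallingFact_mul_prod_div_factorial {ι : Type*} (s : Finset ι) (c : ℕ) (a : ι → F) (ν : ι → ℕ)
    (hν : ∀ i ∈ s, ((ν i).factorial : F) ≠ 0) :
    fallingFact (c : F) (∑ i ∈ s, ν i) * ∏ i ∈ s, (a i ^ ν i / ((ν i).factorial : F)) =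
      (c.choose (∑ i ∈ s, ν i) * Nat.multinomial s ν : F) * ∏ i ∈ s, a i ^ ν i := by
  have prod_ne : ∏ i ∈ s, ((ν i).factorial : F) ≠ 0 := Finset.prod_ne_zero_iff.mpr hν
  rw [fallingFact_natCast, Nat.descFactorial_eq_factorial_mul_choose, ← Nat.multinomial_spec,
    Finset.prod_div_distrib]
  push_cast
  field_simp

variable (p : ℕ) [Fact p.Prime] [CharP F p] {l : ℕ}

lemma natCast_factorial_ne_zero_of_lt {m : ℕ} (hm : m < p) : (m.factorial : F) ≠ 0 := by
  rw [Ne, CharP.cast_eq_zero_iff F p, (Fact.out : p.Prime).dvd_factorial]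
  exact hm.not_ge

variable {p}

lemma coeff_genPoly_pow_eq_theta (hl : l < p) (c : ℕ) (t : Fin l → F) (k : Fin l) :
    (genPoly t ^ c).coeff (k.1 + 1) = theta (c : F) t k := by
  set s : Fin (k.1 + 1) → F := fun i ↦ t (i.castLE k.2)
  have mk_eq : AdjoinRoot.mk (X ^ (k.1 + 2)) (genPoly t) = genClass s :=
    (mk_eq_genClass_iff (coeff_zero_genPoly t)).mpr fun i ↦ coeff_succ_genPoly t (i.castLE k.2)
  have mk_pow_eq := congrArg (· ^ c) mk_eq
  simp only [genClass, ← map_pow] at mk_pow_eq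
  rw [mk_X_pow_eq_mk_iff.mp mk_pow_eq (k.1 + 1) (by omega), coeff_succ_genPoly_pow]
  refine Finset.sum_congr rfl fun ν hν ↦ ?_
  refine (fallingFact_mul_prod_div_factorial _ c s ν fun i _ ↦ ?_).symm
  have hνi : ν i < k.1 + 2 :=
    Finset.mem_range.mp (Fintype.mem_piFinset.mp (Finset.mem_filter.mp hν).1 i)
  exact natCast_factorial_ne_zero_of_lt p (by omega)

lemma genClass_theta (hl : l < p) (c : ℕ) (t : Fin l → F) :
    genClass (theta (c : F) t) = genClass t ^ c := by
  rw [eq_comm, genClass, ← map_pow,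
    mk_eq_genClass_iff (coeff_zero_pow_eq_one (coeff_zero_genPoly t) c)]
  exact coeff_genPoly_pow_eq_theta hl c t

lemma theta_zero (hl : l < p) (c : ℕ) : theta (c : F) (0 : Fin l → F) = 0 := by
  rw [← genClass_eq_one_iff, genClass_theta hl, genClass_eq_one_iff.mpr rfl, one_pow]

end Theta

section SignedReverse

/-- The monoid homomorphism sending a monic polynomial `∏ (X - aᵢ)` to `∏ (1 + aᵢ X)`, whose
coefficients are the elementary symmetric functions of the `aᵢ`. -/
noncomputable def signedReverse (R : Type*) [CommRing R] [IsDomain R] : R[X] →* R[X] where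
  toFun f := f.reverse.comp (-X)
  map_one' := by rw [← C_1, reverse_C, C_comp]
  map_mul' f g := by rw [reverse_mul_of_domain, mul_comp]

variable {R : Type*} [CommRing R] [IsDomain R]

lemma coeff_signedReverse (f : R[X]) {k : ℕ} (hk : k ≤ f.natDegree) :
    (signedReverse R f).coeff k = (-1) ^ k * f.coeff (f.natDegree - k) := by
  have neg_X_eq : (-X : R[X]) = C (-1) * X := by simp
  change (f.reverse.comp (-X)).coeff k = _
  rw [neg_X_eq, comp_C_mul_X_coeff, coeff_reverse, revAt_le hk, mul_comm]

lemma coeff_zero_signedReverse {f : R[X]} (hf : f.Monic) : (signedReverse R f).coeff 0 = 1 := by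
  rw [coeff_signedReverse f f.natDegree.zero_le, pow_zero, one_mul, Nat.sub_zero,
    hf.coeff_natDegree]

lemma signedReverse_X_sub_C (a : R) : signedReverse R (X - C a) = 1 + C a * X := by
  have reverse_eq : (X - C a).reverse = 1 - C a * X := by
    rw [reverse, natDegree_X_sub_C, reflect_sub, reflect_one_X, reflect_C, pow_one]
  change (X - C a).reverse.comp (-X) = _
  simp [reverse_eq]

lemma signedReverse_map {K L : Type*} [Field K] [Field L] (φ : K →+* L) (f : K[X]) :
    signedReverse L (f.map φ) = (signedReverse K f).map φ := by
  change (f.map φ).reverse.comp (-X) = (f.reverse.comp (-X)).map φ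
  rw [reverse, natDegree_map, reflect_map, Polynomial.map_comp, Polynomial.map_neg, map_X, reverse]

end SignedReverse

section Frobenius

variable {F K : Type*} [Field F] [Fintype F] [Field K] [Algebra F K]

lemma pow_card_pow_eq_self_iff {a : K} (ha : IsIntegral F a) (j : ℕ) :
    a ^ Fintype.card F ^ j = a ↔ (minpoly F a).natDegree ∣ j := by
  rw [(minpoly.irreducible ha).natDegree_dvd_iff_dvd_X_pow_card_pow_sub_X, minpoly.dvd_iff,
    Nat.card_eq_fintype_card]
  simp [sub_eq_zero]

lemma minimalPeriod_pow_card {a : K} (ha : IsIntegral F a) :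
    Function.minimalPeriod (· ^ Fintype.card F) a = (minpoly F a).natDegree := by
  refine Nat.dvd_right_iff_eq.mp fun j ↦ ?_
  rw [← Function.isPeriodicPt_iff_minimalPeriod_dvd, Function.IsPeriodicPt, pow_iterate]
  exact pow_card_pow_eq_self_iff ha j

lemma isRoot_map_minpoly_pow_card_pow (a : K) (i : ℕ) :
    ((minpoly F a).map (algebraMap F K)).IsRoot (a ^ Fintype.card F ^ i) := by
  have frobenius_pow_apply : (FiniteField.frobeniusAlgHom F K ^ i) a = a ^ Fintype.card F ^ i := by
    rw [AlgHom.coe_pow, FiniteField.coe_frobeniusAlgHom, pow_iterate]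
  rw [IsRoot.def, eval_map_algebraMap, ← frobenius_pow_apply, aeval_algHom_apply, minpoly.aeval,
    map_zero]

lemma prod_range_natDegree_X_sub_C_pow_card_pow {a : K} (ha : IsIntegral F a) :
    ∏ i ∈ Finset.range (minpoly F a).natDegree, (X - C (a ^ Fintype.card F ^ i)) =
      (minpoly F a).map (algebraMap F K) := by
  have injOn_conjugates : Set.InjOn (fun i ↦ a ^ Fintype.card F ^ i)
      (Finset.range (minpoly F a).natDegree) := by
    have injOn_iterate := Function.iterate_injOn_Iio_minimalPeriod (f := (· ^ Fintype.card F))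
      (x := a)
    simpa only [minimalPeriod_pow_card ha, pow_iterate, Finset.coe_range] using injOn_iterate
  refine (eq_of_monic_of_dvd_of_natDegree_le (monic_prod_X_sub_C _ _)
    ((minpoly.monic ha).map _) ?_ ?_).symm
  · refine Finset.prod_dvd_of_coprime (fun i hi j hj hij ↦ ?_) fun i _ ↦
      dvd_iff_isRoot.mpr (isRoot_map_minpoly_pow_card_pow a i)
    exact isCoprime_X_sub_C_of_isUnit_sub
      (sub_ne_zero_of_ne (injOn_conjugates.ne hi hj hij)).isUnit
  · rw [natDegree_map, natDegree_finsetProd_X_sub_C_eq_card, Finset.card_range]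

lemma prod_range_X_sub_C_pow_card_pow {a : K} (ha : IsIntegral F a) (s : ℕ) :
    ∏ i ∈ Finset.range ((minpoly F a).natDegree * s), (X - C (a ^ Fintype.card F ^ i)) =
      (minpoly F a).map (algebraMap F K) ^ s := by
  induction s with
  | zero => simp
  | succ s ih =>
    have frobenius_period :
        a ^ Fintype.card F ^ ((minpoly F a).natDegree * s) = a :=
      (pow_card_pow_eq_self_iff ha _).mpr (dvd_mul_right _ _)
    simp only [mul_add_one, Finset.prod_range_add, ih, pow_add, pow_mul a, frobenius_period,
      prod_range_natDegree_X_sub_C_pow_card_pow ha, pow_one]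

lemma coeff_prod_range_one_add_C_mul_X {R : Type*} [CommSemiring R] (b : ℕ → R) (m k : ℕ) :
    (∏ i ∈ Finset.range m, (1 + C (b i) * X)).coeff k =
      ∑ S ∈ Finset.powersetCard k (Finset.range m), ∏ i ∈ S, b i := by
  simp only [Finset.prod_one_add, finsetSum_coeff, Finset.powersetCard_eq_filter,
    Finset.sum_filter, Finset.prod_mul_distrib, Finset.prod_const, ← map_prod, coeff_C_mul_X_pow,
    eq_comm]

lemma traceFn_eq_algebraMap_coeff_signedReverse {a : K} (ha : IsIntegral F a) (s k : ℕ) :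
    traceFn (Fintype.card F) ((minpoly F a).natDegree * s) k a =
      algebraMap F K ((signedReverse F (minpoly F a) ^ s).coeff k) := by
  have prod_eq : ∏ i ∈ Finset.range ((minpoly F a).natDegree * s),
      (1 + C (a ^ Fintype.card F ^ i) * X) =
        (signedReverse F (minpoly F a) ^ s).map (algebraMap F K) := by
    simp_rw [← signedReverse_X_sub_C]
    rw [← map_prod, prod_range_X_sub_C_pow_card_pow ha, map_pow, signedReverse_map,
      Polynomial.map_pow]
  rw [traceFn, ← coeff_prod_range_one_add_C_mul_X, prod_eq, coeff_map]

end Frobenius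

section Counting

/-- The number of monic irreducible polynomials of degree `e` over `F` satisfying `P`. -/
noncomputable def irreducibleCount (F : Type*) [Field F] (e : ℕ) (P : F[X] → Prop) : ℕ :=
  Nat.card {f : F[X] // f.Monic ∧ Irreducible f ∧ f.natDegree = e ∧ P f}

lemma irreducibleCount_congr {F : Type*} [Field F] {e : ℕ} {P Q : F[X] → Prop}
    (h : ∀ f : F[X], f.Monic → f.natDegree = e → (P f ↔ Q f)) :
    irreducibleCount F e P = irreducibleCount F e Q :=
  Nat.card_congr <| Equiv.subtypeEquivRight fun f ↦
    and_congr_right fun hmonic ↦ and_congr_right fun _ ↦ and_congr_right fun hdeg ↦ h f hmonic hdeg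

lemma irreducibleCount_false {F : Type*} [Field F] (e : ℕ) :
    irreducibleCount F e (fun _ ↦ False) = 0 := by
  simp [irreducibleCount]

variable {F K : Type*} [Field F] [Fintype F] [Field K] [Fintype K] [Algebra F K]

lemma natDegree_minpoly_dvd_of_card_eq {m : ℕ} (hK : Fintype.card K = Fintype.card F ^ m) (a : K) :
    (minpoly F a).natDegree ∣ m := by
  rw [← pow_card_pow_eq_self_iff (.of_finite F a), ← hK, FiniteField.pow_card]

lemma card_filter_minpoly_eq {m : ℕ} (hK : Fintype.card K = Fintype.card F ^ m) {f : F[X]}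
    (hmonic : f.Monic) (hirr : Irreducible f) (hdeg : f.natDegree ∣ m) :
    Finset.card {a : K | minpoly F a = f} = f.natDegree := by
  have dvd_X_pow_sub_X : f ∣ X ^ Fintype.card K - X := by
    rw [hK, ← Nat.card_eq_fintype_card]
    exact hirr.natDegree_dvd_iff_dvd_X_pow_card_pow_sub_X.mp hdeg
  have splits : (f.map (algebraMap F K)).Splits := by
    refine (FiniteField.isSplittingField_sub K F).splits.of_dvd ?_
      (Polynomial.map_dvd _ dvd_X_pow_sub_X)
    exact Polynomial.map_ne_zero (FiniteField.X_pow_card_sub_X_ne_zero F Fintype.one_lt_card)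
  rw [← card_rootSet_eq_natDegree (PerfectField.separable_of_irreducible hirr) splits,
    ← Set.toFinset_card]
  congr 1
  ext a
  simp only [Finset.mem_filter_univ, Set.mem_toFinset, mem_rootSet_of_ne hirr.ne_zero]
  exact ⟨fun h ↦ h ▸ minpoly.aeval F a,
    fun h ↦ (minpoly.eq_of_irreducible_of_monic hirr h hmonic).symm⟩

lemma card_filter_natDegree_minpoly_eq {m e : ℕ}
    (hK : Fintype.card K = Fintype.card F ^ m) (he : e ∣ m) (P : F[X] → Prop) :
    Finset.card {a : K | P (minpoly F a) ∧ (minpoly F a).natDegree = e} =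
      e * irreducibleCount F e P := by
  set s : Finset K := {a | P (minpoly F a) ∧ (minpoly F a).natDegree = e} with hs
  have mem_image (f : F[X]) : f ∈ s.image (minpoly F) ↔
      f.Monic ∧ Irreducible f ∧ f.natDegree = e ∧ P f := by
    simp only [hs, Finset.mem_image, Finset.mem_filter_univ]
    constructor
    · rintro ⟨a, ⟨hP, hdeg⟩, rfl⟩
      exact ⟨minpoly.monic (.of_finite F a), minpoly.irreducible (.of_finite F a), hdeg, hP⟩
    · rintro ⟨hmonic, hirr, rfl, hP⟩
      have roots_nonempty : Finset.Nonempty {a : K | minpoly F a = f} := by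
        rw [← Finset.card_pos, card_filter_minpoly_eq hK hmonic hirr he]
        exact hirr.natDegree_pos
      obtain ⟨a, ha⟩ := roots_nonempty
      obtain rfl := (Finset.mem_filter_univ a).mp ha
      exact ⟨a, ⟨hP, rfl⟩, rfl⟩
  have card_fiber (f : F[X]) (hf : f ∈ s.image (minpoly F)) :
      Finset.card {a ∈ s | minpoly F a = f} = e := by
    obtain ⟨hmonic, hirr, rfl, hP⟩ := (mem_image f).mp hf
    rw [← card_filter_minpoly_eq hK hmonic hirr he]
    congr 1
    ext a
    simp only [hs, Finset.mem_filter, Finset.mem_univ, true_and, and_iff_right_iff_imp]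
    rintro rfl
    exact ⟨hP, rfl⟩
  rw [irreducibleCount, Nat.subtype_card _ mem_image, Finset.card_eq_sum_card_image (minpoly F) s,
    Finset.sum_const_nat card_fiber, mul_comm]

lemma card_subtype_minpoly {m : ℕ} (hm : m ≠ 0) (hK : Fintype.card K = Fintype.card F ^ m)
    (P : F[X] → Prop) :
    Nat.card {a : K // P (minpoly F a)} = ∑ e ∈ m.divisors, e * irreducibleCount F e P := by
  have natDegree_mem (a : K) : (minpoly F a).natDegree ∈ m.divisors :=
    Nat.mem_divisors.mpr ⟨natDegree_minpoly_dvd_of_card_eq hK a, hm⟩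
  rw [Nat.card_eq_fintype_card, Fintype.card_subtype,
    Finset.card_eq_sum_card_fiberwise fun a _ ↦ natDegree_mem a]
  refine Finset.sum_congr rfl fun e he ↦ ?_
  rw [Finset.filter_filter, card_filter_natDegree_minpoly_eq hK (Nat.dvd_of_mem_divisors he)]

lemma card_pow_eq_sum_irreducibleCount {m : ℕ} (hm : m ≠ 0)
    (hK : Fintype.card K = Fintype.card F ^ m) :
    Fintype.card F ^ m = ∑ e ∈ m.divisors, e * irreducibleCount F e fun _ ↦ True := by
  rw [← card_subtype_minpoly hm hK, ← hK, Nat.card_eq_fintype_card, Fintype.card_subtype_true]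

end Counting

section TraceClass

variable {F : Type*} [Field F] {l : ℕ}

/-- The first `l` elementary symmetric functions of the roots of a monic `f`, encoded as the class
of `signedReverse F f` modulo `X ^ (l + 1)`. -/
noncomputable def traceClass (l : ℕ) (f : F[X]) : AdjoinRoot (X ^ (l + 1) : F[X]) :=
  AdjoinRoot.mk _ (signedReverse F f)

lemma traceClass_pow_char (p : ℕ) [Fact p.Prime] [CharP F p] (hl : l < p) {f : F[X]}
    (hf : f.Monic) : traceClass l f ^ p = 1 :=
  mk_X_pow_pow_char_eq_one p hl (coeff_zero_signedReverse hf)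

lemma traceClass_eq_genClass_iff {f : F[X]} (hf : f.Monic) (hl : l ≤ f.natDegree) {t : Fin l → F} :
    traceClass l f = genClass t ↔
      ∀ k : Fin l, f.coeff (f.natDegree - (k.1 + 1)) = (-1) ^ (k.1 + 1) * t k := by
  rw [traceClass, mk_eq_genClass_iff (coeff_zero_signedReverse hf)]
  refine forall_congr' fun k ↦ ?_
  rw [coeff_signedReverse f (by omega)]
  rcases neg_one_pow_eq_or F (k.1 + 1) with h | h <;> simp [h, neg_eq_iff_eq_neg]

lemma forall_traceFn_eq_iff [Fintype F] {K : Type*} [Field K] [Algebra F K] {a : K}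
    (ha : IsIntegral F a) {m : ℕ} (hm : (minpoly F a).natDegree ∣ m) {t : Fin l → F} :
    (∀ k : Fin l, traceFn (Fintype.card F) m (k.1 + 1) a = algebraMap F K (t k)) ↔
      traceClass l (minpoly F a) ^ (m / (minpoly F a).natDegree) = genClass t := by
  obtain ⟨s, rfl⟩ := hm
  have coeff_zero_pow := coeff_zero_pow_eq_one (coeff_zero_signedReverse (minpoly.monic ha)) s
  rw [Nat.mul_div_cancel_left s (minpoly.natDegree_pos ha), traceClass, ← map_pow,
    mk_eq_genClass_iff coeff_zero_pow]
  simp only [traceFn_eq_algebraMap_coeff_signedReverse ha, (algebraMap F K).injective.eq_iff]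

/-- The number of monic irreducible polynomials of degree `e` over `F` whose roots have traces
`t₁, …, t_l` in the extension of degree `n`, taken to be `0` when `p ∣ n / e`. These are the counts
that survive the Möbius inversion over divisors prime to `p`. -/
noncomputable def tameCount (p n : ℕ) (t : Fin l → F) (e : ℕ) : ℕ :=
  irreducibleCount F e fun f ↦ ¬ p ∣ n / e ∧ traceClass l f ^ (n / e) = genClass t

variable {p : ℕ} [Fact p.Prime] [CharP F p]

lemma traceClass_pow_eq_genClass_theta_inv_iff (hl : l < p) {d : ℕ} (hd : ¬ p ∣ d) {f : F[X]}
    (hf : f.Monic) (s : ℕ) (t : Fin l → F) :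
    traceClass l f ^ s = genClass (theta (((d : ZMod p)⁻¹.val : ℕ) : F) t) ↔
      traceClass l f ^ (s * d) = genClass t := by
  have mul_inv_modEq : d * (d : ZMod p)⁻¹.val ≡ 1 [MOD p] := by
    rw [← ZMod.natCast_eq_natCast_iff, Nat.cast_mul, Nat.cast_one]
    exact ZMod.mul_val_inv (((Fact.out : p.Prime).coprime_iff_not_dvd.mpr hd).symm)
  have pow_char : (traceClass l f ^ s) ^ p = 1 := by
    rw [← pow_mul, mul_comm, pow_mul, traceClass_pow_char p hl hf, one_pow]
  rw [genClass_theta hl, pow_mul,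
    pow_mul_eq_pow_iff_of_modEq pow_char (genClass_pow_char p hl t) mul_inv_modEq]

lemma irreducibleCount_eq_tameCount_add (hl : l < p) (n e : ℕ) (t : Fin l → F) :
    (irreducibleCount F e fun f ↦ traceClass l f ^ (n / e) = genClass t) =
      tameCount p n t e +
        if t = 0 ∧ p ∣ n / e then irreducibleCount F e fun _ ↦ True else 0 := by
  rw [tameCount]
  by_cases hp : p ∣ n / e
  · have class_pow_eq_iff (f : F[X]) (hf : f.Monic) :
        traceClass l f ^ (n / e) = genClass t ↔ t = 0 := by
      obtain ⟨s, hs⟩ := hp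
      rw [hs, pow_mul, traceClass_pow_char p hl hf, one_pow, eq_comm, genClass_eq_one_iff]
    rw [irreducibleCount_congr fun f hf _ ↦ class_pow_eq_iff f hf]
    by_cases ht : t = 0 <;> simp [hp, ht, irreducibleCount_false]
  · simp [hp]

end TraceClass

section TraceCounts

variable {p l : ℕ} {F : Type} [Field F]

lemma Icnt_eq_irreducibleCount {n : ℕ} (hn : l ≤ n) (t : Fin l → F) :
    Icnt l F n t = irreducibleCount F n fun f ↦ traceClass l f = genClass t := by
  refine irreducibleCount_congr fun f hmonic hdeg ↦ ?_
  rw [traceClass_eq_genClass_iff hmonic (hdeg ▸ hn), hdeg]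

variable [Fintype F] {K : ℕ → Type} [∀ m, Field (K m)] [∀ m, Fintype (K m)] [∀ m, Algebra F (K m)]

lemma Fcnt_eq_sum_irreducibleCount {m : ℕ} (hm : m ≠ 0)
    (hK : Fintype.card (K m) = Fintype.card F ^ m) (t : Fin l → F) :
    Fcnt (Fintype.card F) l F K m t = ∑ e ∈ m.divisors,
      e * irreducibleCount F e fun f ↦ traceClass l f ^ (m / e) = genClass t := by
  have card_eq := card_subtype_minpoly hm hK
    fun f ↦ traceClass l f ^ (m / f.natDegree) = genClass t
  simp only [Fcnt, forall_traceFn_eq_iff (.of_finite F _) (natDegree_minpoly_dvd_of_card_eq hK _),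
    card_eq]
  refine Finset.sum_congr rfl fun e _ ↦ congrArg (e * ·) ?_
  exact irreducibleCount_congr fun f _ hdeg ↦ by rw [hdeg]

variable [Fact p.Prime] [CharP F p]

lemma Fcnt_theta_inv_eq_sum_irreducibleCount (hl : l < p) {n d : ℕ} (hn : n ≠ 0) (hdn : d ∣ n)
    (hd : ¬ p ∣ d) (hK : Fintype.card (K (n / d)) = Fintype.card F ^ (n / d)) (t : Fin l → F) :
    Fcnt (Fintype.card F) l F K (n / d) (theta (((d : ZMod p)⁻¹.val : ℕ) : F) t) =
      ∑ e ∈ (n / d).divisors,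
        e * irreducibleCount F e fun f ↦ traceClass l f ^ (n / e) = genClass t := by
  rw [Fcnt_eq_sum_irreducibleCount (ne_zero_of_dvd_ne_zero hn (Nat.div_dvd_of_dvd hdn)) hK]
  refine Finset.sum_congr rfl fun e he ↦ congrArg (e * ·) ?_
  refine irreducibleCount_congr fun f hf _ ↦ ?_
  have div_eq : n / e = n / d / e * d := by
    rw [Nat.div_mul_right_comm (Nat.dvd_of_mem_divisors he), Nat.div_mul_cancel hdn]
  rw [traceClass_pow_eq_genClass_theta_inv_iff hl hd hf, div_eq]

lemma Fcnt_theta_inv_eq_sum_tameCount_add (hl : l < p) {n d : ℕ} (hn : n ≠ 0) (hdn : d ∣ n)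
    (hd : ¬ p ∣ d) (hK : ∀ m, 1 ≤ m → Fintype.card (K m) = Fintype.card F ^ m) (t : Fin l → F) :
    Fcnt (Fintype.card F) l F K (n / d) (theta (((d : ZMod p)⁻¹.val : ℕ) : F) t) =
      ∑ e ∈ (n / d).divisors, e * tameCount p n t e +
        if t = 0 ∧ p * d ∣ n then Fintype.card F ^ (n / (p * d)) else 0 := by
  have hpd : p.Coprime d := (Fact.out : p.Prime).coprime_iff_not_dvd.mpr hd
  rw [Fcnt_theta_inv_eq_sum_irreducibleCount hl hn hdn hd
    (hK _ (Nat.one_le_iff_ne_zero.mpr (ne_zero_of_dvd_ne_zero hn (Nat.div_dvd_of_dvd hdn))))]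
  simp only [irreducibleCount_eq_tameCount_add hl, mul_add, Finset.sum_add_distrib, mul_ite,
    mul_zero]
  by_cases ht : t = 0
  · simp only [ht, true_and, ← Finset.sum_filter, filter_dvd_div_divisors_div hpd hdn]
    split_ifs with h
    · have div_ne_zero : n / (p * d) ≠ 0 := ne_zero_of_dvd_ne_zero hn (Nat.div_dvd_of_dvd h)
      rw [card_pow_eq_sum_irreducibleCount div_ne_zero
        (hK _ (Nat.one_le_iff_ne_zero.mpr div_ne_zero))]
    · rw [Finset.sum_empty]
  · simp [ht]

theorem statement4_general (hl : l < p)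
    (hK : ∀ m, 1 ≤ m → Fintype.card (K m) = Fintype.card F ^ m)
    {n : ℕ} (hn : l ≤ n) (t : Fin l → F) :
    (n : ℤ) * (Icnt l F n t : ℤ) = ∑ d ∈ n.divisors with ¬ p ∣ d,
      ArithmeticFunction.moebius d *
        ((Fcnt (Fintype.card F) l F K (n / d) (theta (((d : ZMod p)⁻¹.val : ℕ) : F) t) : ℤ) -
          if t = 0 ∧ p * d ∣ n then (Fintype.card F : ℤ) ^ (n / (p * d)) else 0) := by
  rcases Nat.eq_zero_or_pos n with rfl | hn0
  · simp
  have tameCount_self : tameCount p n t n = Icnt l F n t := by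
    rw [Icnt_eq_irreducibleCount hn, tameCount, Nat.div_self hn0]
    simp only [(Fact.out : p.Prime).one_lt.ne', Nat.dvd_one, not_false_eq_true, true_and, pow_one]
  have tameCount_eq_zero (e : ℕ) (he : p ∣ n / e) : tameCount p n t e = 0 := by
    simp only [tameCount, he, not_true_eq_false, false_and, irreducibleCount_false]
  rw [← tameCount_self, ← sum_moebius_mul_sum_divisors_of_not_dvd (p := p) hn0
    (f := fun e ↦ (e : ℤ) * tameCount p n t e)
    fun e _ he ↦ by rw [tameCount_eq_zero e he, Nat.cast_zero, mul_zero]]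
  refine Finset.sum_congr rfl fun d hd ↦ congrArg _ ?_
  obtain ⟨hdn, hpd⟩ := Finset.mem_filter.mp hd
  rw [Fcnt_theta_inv_eq_sum_tameCount_add hl hn0.ne' (Nat.dvd_of_mem_divisors hdn) hpd hK t]
  push_cast
  rw [add_sub_cancel_right]

end TraceCounts

theorem statement4 (p r q l : ℕ) (hp : p.Prime) (hodd : Odd p) (hr : 1 ≤ r) (hq : q = p ^ r)
    (hl : 1 ≤ l) (hlp : l < p)
    (F : Type) [Field F] [Fintype F] (hF : Fintype.card F = q)
    (K : ℕ → Type) [∀ m, Field (K m)] [∀ m, Fintype (K m)] [∀ m, Algebra F (K m)]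
    (hK : ∀ m, 1 ≤ m → Fintype.card (K m) = q ^ m)
    (n : ℕ) (hn : l ≤ n) (t : Fin l → F) :
    (t = 0 →
      (n : ℤ) * (Icnt l F n t : ℤ)
        = ∑ d ∈ n.divisors.filter (fun d => ¬ p ∣ d),
            (ArithmeticFunction.moebius d) *
              ((Fcnt q l F K (n / d) 0 : ℤ) -
                if p * d ∣ n then (q : ℤ) ^ (n / (p * d)) else 0)) ∧
    (t ≠ 0 →
      (n : ℤ) * (Icnt l F n t : ℤ)
        = ∑ d ∈ n.divisors.filter (fun d => ¬ p ∣ d),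
            (ArithmeticFunction.moebius d) *
              (Fcnt q l F K (n / d) (theta ((((d : ZMod p)⁻¹).val : ℕ) : F) t) : ℤ)) := by
  have : Fact p.Prime := ⟨hp⟩
  have : CharP F p := charP_of_card_eq_prime_pow (hF.trans hq)
  subst hF
  have general := statement4_general hlp hK hn t
  exact ⟨fun ht ↦ by simpa only [ht, theta_zero hlp, true_and] using general,
    fun ht ↦ by simpa only [ht, false_and, if_false, sub_zero] using general⟩
end

section
/- For every prime p and every integer j ≥ 1, the sequence n ↦ (binomial coefficient C(n,j) reduced modulo p), defined for n ≥ 0, is periodic, and its least positive period is p^(1 + ⌊log_p j⌋). -/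
/-!
By Pascal's rule, `T` is a period of `n ↦ C(n, j + 1)` exactly when it is a period of the difference
sequence `n ↦ C(n, j)` and `C(T, j + 1) = C(0, j + 1) = 0`. Hence the periods of `n ↦ C(n, j)` are
the `T` at which all of `C(T, 1), …, C(T, j)` vanish. Modulo `p ^ k` this is a question about the
`p`-adic valuation of binomial coefficients, settled by `T * C(T - 1, i - 1) = i * C(T, i)`: the
valuation of `C(T, i)` is at least that of `T` minus that of `i`, with equality if `i` is a power of
`p` dividing `T`. The strictest condition comes from the largest power of `p` not exceeding `j`.
-/

open Function

section Periodic

variable {R : Type*} [AddGroupWithOne R] {j T : ℕ}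

theorem periodic_choose_succ_iff :
    Periodic (fun n : ℕ => (n.choose (j + 1) : R)) T ↔
      Periodic (fun n : ℕ => (n.choose j : R)) T ∧ (T.choose (j + 1) : R) = 0 := by
  have pascal (n : ℕ) :
      ((n + 1 + T).choose (j + 1) : R) = (n + T).choose j + (n + T).choose (j + 1) := by
    rw [Nat.add_right_comm, Nat.choose_succ_succ, Nat.cast_add]
  constructor
  · refine fun h => ⟨fun n => ?_, by simpa using h.eq⟩
    have hsucc := h (n + 1)
    have hn := h n
    simp only [pascal, Nat.choose_succ_succ n, Nat.cast_add] at hsucc hn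
    rwa [hn, add_left_inj] at hsucc
  · rintro ⟨h, hT⟩ n
    induction n with
    | zero => simpa using hT
    | succ n ih =>
      have hn := h n
      simp only at hn ih ⊢
      rw [pascal, hn, ih, Nat.choose_succ_succ, Nat.cast_add]

theorem periodic_choose_iff_forall_choose_eq_zero :
    Periodic (fun n : ℕ => (n.choose j : R)) T ↔ ∀ i, i ≠ 0 → i ≤ j → (T.choose i : R) = 0 := by
  induction j with
  | zero => simp +contextual [Periodic]
  | succ j ih =>
    rw [periodic_choose_succ_iff, ih]
    constructor
    · rintro ⟨hle, hsucc⟩ i hi hij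
      obtain rfl | hij := Nat.eq_or_lt_of_le hij
      · exact hsucc
      · exact hle i hi (Nat.le_of_lt_succ hij)
    · exact fun h => ⟨fun i hi hij => h i hi (hij.trans j.le_succ), h _ j.succ_ne_zero le_rfl⟩

end Periodic

section PrimePower

variable {p a e i j k n T : ℕ}

theorem pow_dvd_choose_of_pow_add_dvd (hp : p.Prime) (hT : p ^ (k + e) ∣ T)
    (hi : ¬ p ^ (e + 1) ∣ i) : p ^ k ∣ T.choose i := by
  have hi0 : i ≠ 0 := fun h => hi (h ▸ dvd_zero _)
  have hdvd : T ∣ i * T.choose i := by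
    obtain ⟨i, rfl⟩ := Nat.exists_eq_succ_of_ne_zero hi0
    cases T with
    | zero => simp
    | succ T => exact ⟨T.choose i, by rw [Nat.add_one_mul_choose_eq, mul_comm]⟩
  obtain ⟨a, u, hu, rfl⟩ := Nat.exists_eq_pow_mul_and_not_dvd hi0 p hp.ne_one
  have ha : a ≤ e := not_lt.1 fun h => hi (dvd_mul_of_dvd_left (pow_dvd_pow p h) u)
  have hmul : p ^ a * p ^ k ∣ p ^ a * (u * T.choose (p ^ a * u)) := by
    rw [← pow_add, ← mul_assoc]
    exact (pow_dvd_pow p (by lia)).trans (hT.trans hdvd)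
  exact hp.prime.pow_dvd_of_dvd_mul_left k hu
    (Nat.dvd_of_mul_dvd_mul_left (pow_pos hp.pos a) hmul)

theorem not_dvd_choose_of_pow_dvd_succ (hp : p.Prime) (hn : p ^ a ∣ n + 1) (hi : i < p ^ a) :
    ¬ p ∣ n.choose i := by
  induction i with
  | zero => simpa using hp.ne_one
  | succ i ih =>
    have hsum : p ∣ n.choose i + n.choose (i + 1) := by
      obtain ⟨a, rfl⟩ : ∃ b, a = b + 1 :=
        Nat.exists_eq_succ_of_ne_zero (by rintro rfl; simp at hi)
      rw [← Nat.choose_succ_succ, ← pow_one p]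
      exact pow_dvd_choose_of_pow_add_dvd hp (add_comm a 1 ▸ hn)
        (Nat.not_dvd_of_pos_of_lt i.succ_pos hi)
    exact fun h => ih (i.lt_succ_self.trans hi) ((Nat.dvd_add_left h).1 hsum)

theorem pow_add_dvd_of_pow_dvd_choose_pow (hp : p.Prime) (hT : p ^ a ∣ T)
    (h : p ^ k ∣ T.choose (p ^ a)) : p ^ (k + a) ∣ T := by
  cases T with
  | zero => exact dvd_zero _
  | succ n =>
    obtain ⟨i, hi⟩ := Nat.exists_eq_succ_of_ne_zero (pow_pos hp.pos a).ne'
    have hmul : p ^ (k + a) ∣ (n + 1) * n.choose i := by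
      rw [Nat.add_one_mul_choose_eq, ← Nat.succ_eq_add_one i, ← hi, pow_add]
      exact mul_dvd_mul_right h _
    exact hp.prime.pow_dvd_of_dvd_mul_right _
      (not_dvd_choose_of_pow_dvd_succ hp hT (hi ▸ i.lt_succ_self)) hmul

theorem forall_pow_dvd_choose_iff (hp : p.Prime) (hk : k ≠ 0) (hj : j ≠ 0) :
    (∀ i, i ≠ 0 → i ≤ j → p ^ k ∣ T.choose i) ↔ p ^ (k + Nat.log p j) ∣ T := by
  constructor
  · intro h
    have hdvd (e : ℕ) (he : p ^ e ≤ j) : p ^ (k + e) ∣ T := by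
      induction e with
      | zero => simpa using h 1 one_ne_zero (Nat.one_le_iff_ne_zero.2 hj)
      | succ e ih =>
        have hT : p ^ (k + e) ∣ T := ih ((Nat.pow_le_pow_right hp.pos e.le_succ).trans he)
        exact pow_add_dvd_of_pow_dvd_choose_pow hp ((pow_dvd_pow p (by lia)).trans hT)
          (h _ (pow_pos hp.pos _).ne' he)
    exact hdvd _ (Nat.pow_log_le_self p hj)
  · intro hT i hi hij
    have hlt : i < p ^ (Nat.log p j + 1) := hij.trans_lt (Nat.lt_pow_succ_log_self hp.one_lt j)
    exact pow_dvd_choose_of_pow_add_dvd hp hT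
      (Nat.not_dvd_of_pos_of_lt (Nat.pos_of_ne_zero hi) hlt)

end PrimePower

theorem statement5_general {R : Type*} [AddGroupWithOne R] {p k j T : ℕ} [CharP R (p ^ k)]
    (hp : p.Prime) (hk : k ≠ 0) (hj : j ≠ 0) :
    Periodic (fun n : ℕ => (n.choose j : R)) T ↔ p ^ (k + Nat.log p j) ∣ T := by
  simp only [periodic_choose_iff_forall_choose_eq_zero, CharP.cast_eq_zero_iff R (p ^ k),
    forall_pow_dvd_choose_iff hp hk hj]

theorem statement5 (p j : ℕ) (hp : p.Prime) (hj : 1 ≤ j) :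
    Function.Periodic (fun n : ℕ => ((n.choose j : ZMod p))) (p ^ (1 + Nat.log p j)) ∧
    ∀ T : ℕ, 0 < T → Function.Periodic (fun n : ℕ => ((n.choose j : ZMod p))) T →
      p ^ (1 + Nat.log p j) ≤ T := by
  have : CharP (ZMod p) (p ^ 1) := (pow_one p).symm ▸ ZMod.charP p
  have hiff {T : ℕ} := statement5_general (R := ZMod p) (T := T) hp one_ne_zero
    (Nat.one_le_iff_ne_zero.1 hj)
  exact ⟨hiff.2 dvd_rfl, fun T hT h => Nat.le_of_dvd hT (hiff.1 h)⟩
end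

section
/- Let m ≥ 1 and index rows and columns by the vectors of F_2^m, where F_2 = ZMod 2. Let S be the matrix over ℚ with S_{i,j} = 1 if ⟨i,j⟩ = 0 and S_{i,j} = 0 if ⟨i,j⟩ = 1; let H be the matrix with H_{i,j} = (−1)^{⟨i,j⟩} (so H_{i,j} = 1 if ⟨i,j⟩ = 0 and −1 if ⟨i,j⟩ = 1); and let A be the matrix whose only nonzero entry is A_{0,0} = 1, where 0 is the zero vector. Then S is invertible over ℚ and S^{−1} = (1/2^{m−1})·H − A. -/
/-!
Over a field of characteristic other than `2`, the sign `χ(0) = 1`, `χ(1) = -1` is a faithful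
additive character of `ZMod 2`, so orthogonality of characters gives `H Hᵀ = |W| • 1` for
`H v w = χ(B v w)` with `B` a pairing that is nondegenerate on the left. Since `2 S` is `H` plus
the all-ones matrix, every row of which is the row of `H` at `0`, the row `v` of `2 S Hᵀ` is the
sum of the rows `0` and `v` of `|W| • 1`. The first of these is removed by the matrix unit `A` at
`(0, 0)`: the column of `S` at `0` is all ones, so every row of `S A` is the row `0` of `1`.
-/

open scoped Matrix

section SignCharacter

variable (R : Type*) [CommRing R]

/-- The additive character `x ↦ (-1) ^ x` of the two-element field. -/
def signChar : AddChar (ZMod 2) R :=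
  AddChar.zmodChar 2 neg_one_sq

theorem signChar_apply (x : ZMod 2) : signChar R x = if x = 0 then 1 else -1 := by
  obtain rfl | rfl : x = 0 ∨ x = 1 := by revert x; decide
  · simp
  · simp [signChar, AddChar.zmodChar_apply, ZMod.val_one]

theorem signChar_eq_one_iff [NeZero (2 : R)] {x : ZMod 2} : signChar R x = 1 ↔ x = 0 := by
  have neg_one_ne_one : (-1 : R) ≠ 1 := fun h ↦
    two_ne_zero (α := R) (by linear_combination -h)
  simp [signChar_apply, neg_one_ne_one]

theorem sum_signChar_apply [IsDomain R] [NeZero (2 : R)] {G : Type*} [AddGroup G] [Fintype G]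
    (f : G →+ ZMod 2) [Decidable (f = 0)] :
    ∑ g, signChar R (f g) = if f = 0 then (Fintype.card G : R) else 0 := by
  classical
  have trivial_iff : (signChar R).compAddMonoidHom f = 0 ↔ f = 0 := by
    simp [signChar_eq_one_iff, DFunLike.ext_iff]
  simpa only [AddChar.compAddMonoidHom_apply, trivial_iff] using
    AddChar.sum_eq_ite ((signChar R).compAddMonoidHom f)

end SignCharacter

theorem natCast_card_module_ne_zero {F M R : Type*} [Field F] [Fintype F] [AddCommGroup M]
    [Module F M] [Fintype M] [Semiring R] [NoZeroDivisors R] (hF : (Fintype.card F : R) ≠ 0) :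
    (Fintype.card M : R) ≠ 0 := by
  rw [Module.card_eq_pow_finrank (K := F), Nat.cast_pow]
  exact pow_ne_zero _ hF

theorem separatingLeft_dotProductBilin (R n : Type*) [CommSemiring R] [Fintype n] :
    (dotProductBilin R R : (n → R) →ₗ[R] (n → R) →ₗ[R] R).SeparatingLeft :=
  dotProduct_eq_zero

section Pairing

variable {V W : Type*} [AddCommGroup V] [Module (ZMod 2) V] [AddCommGroup W] [Module (ZMod 2) W]
  (R : Type*) (B : V →ₗ[ZMod 2] W →ₗ[ZMod 2] ZMod 2)

/-- The `0`-`1` matrix of the orthogonality relation `B v w = 0`, with rows and columns indexed by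
all vectors; this is `S` when `B` is the dot product. -/
def orthogonalityMatrix [Zero R] [One R] : Matrix V W R :=
  Matrix.of fun v w ↦ if B v w = 0 then 1 else 0

theorem orthogonalityMatrix_mul_single_zero_zero_apply [NonAssocSemiring R] [DecidableEq V]
    [DecidableEq W] [Fintype W] (v v' : V) :
    (orthogonalityMatrix R B * Matrix.single (0 : W) (0 : V) (1 : R)) v v' =
      (1 : Matrix V V R) 0 v' := by
  obtain rfl | h := eq_or_ne v' 0
  · simp [orthogonalityMatrix]
  · simp [h, h.symm]

variable [CommRing R]

/-- The matrix of the signs `(-1) ^ B v w`, with rows and columns indexed by all vectors; for the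
dot product this is the Sylvester–Hadamard matrix `H`. -/
def signMatrix : Matrix V W R :=
  Matrix.of fun v w ↦ signChar R (B v w)

theorem two_mul_orthogonalityMatrix_apply (v : V) (w : W) :
    2 * orthogonalityMatrix R B v w = signMatrix R B 0 w + signMatrix R B v w := by
  simp only [orthogonalityMatrix, signMatrix, Matrix.of_apply, map_zero, LinearMap.zero_apply,
    signChar_apply]
  split_ifs <;> ring

variable {B}

theorem signMatrix_mul_transpose [IsDomain R] [NeZero (2 : R)] [DecidableEq V] [Fintype W]
    (hB : B.SeparatingLeft) :
    signMatrix R B * (signMatrix R B)ᵀ = (Fintype.card W : R) • 1 := by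
  classical
  ext v v'
  have functional_eq_zero_iff : (B (v - v')).toAddMonoidHom = 0 ↔ v = v' := by
    rw [← sub_eq_zero (a := v)]
    refine ⟨fun h ↦ hB _ (DFunLike.congr_fun h), fun h ↦ ?_⟩
    ext w
    simp [h]
  calc (signMatrix R B * (signMatrix R B)ᵀ) v v'
      = ∑ w, signChar R ((B (v - v')).toAddMonoidHom w) := by
        simp [Matrix.mul_apply, signMatrix, CharTwo.sub_eq_add, AddChar.map_add_eq_mul]
    _ = ((Fintype.card W : R) • (1 : Matrix V V R)) v v' := by
        rw [sum_signChar_apply]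
        simp only [functional_eq_zero_iff, Matrix.smul_apply, Matrix.one_apply, smul_eq_mul,
          mul_ite, mul_one, mul_zero]

theorem two_mul_orthogonalityMatrix_mul_transpose_apply [IsDomain R] [NeZero (2 : R)]
    [DecidableEq V] [Fintype W] (hB : B.SeparatingLeft) (v v' : V) :
    2 * (orthogonalityMatrix R B * (signMatrix R B)ᵀ) v v' =
      Fintype.card W * ((1 : Matrix V V R) 0 v' + (1 : Matrix V V R) v v') := by
  have row (u : V) : ∑ w, signMatrix R B u w * (signMatrix R B)ᵀ w v' =
      Fintype.card W * (1 : Matrix V V R) u v' := by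
    simpa [Matrix.mul_apply] using congr_fun₂ (signMatrix_mul_transpose R hB) u v'
  simp only [Matrix.mul_apply, Finset.mul_sum, ← mul_assoc, two_mul_orthogonalityMatrix_apply,
    add_mul, Finset.sum_add_distrib, row, mul_add]

theorem orthogonalityMatrix_mul_eq_one (K : Type*) [Field K] [NeZero (2 : K)] [DecidableEq V]
    [DecidableEq W] [Fintype W] (hB : B.SeparatingLeft) :
    orthogonalityMatrix K B *
      ((2 / Fintype.card W : K) • (signMatrix K B)ᵀ - Matrix.single 0 0 1) = 1 := by
  ext v v'
  have card_ne_zero : (Fintype.card W : K) ≠ 0 :=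
    natCast_card_module_ne_zero (F := ZMod 2) (by simp [ZMod.card, two_ne_zero])
  rw [Matrix.mul_sub, Matrix.mul_smul, Matrix.sub_apply, Matrix.smul_apply, smul_eq_mul,
    orthogonalityMatrix_mul_single_zero_zero_apply, div_mul_eq_mul_div,
    two_mul_orthogonalityMatrix_mul_transpose_apply K hB, mul_div_cancel_left₀ _ card_ne_zero,
    add_sub_cancel_left]

end Pairing

theorem statement7_general {K V : Type*} [Field K] [NeZero (2 : K)] [AddCommGroup V]
    [Module (ZMod 2) V] [Fintype V] [DecidableEq V] {B : V →ₗ[ZMod 2] V →ₗ[ZMod 2] ZMod 2}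
    (hB : B.SeparatingLeft) :
    IsUnit (orthogonalityMatrix K B) ∧
      (orthogonalityMatrix K B)⁻¹ =
        (2 / Fintype.card V : K) • (signMatrix K B)ᵀ - Matrix.single 0 0 1 :=
  have right_inverse := orthogonalityMatrix_mul_eq_one K hB
  ⟨.of_mul_eq_one _ right_inverse, Matrix.inv_eq_right_inv right_inverse⟩

theorem statement7 (m : ℕ) (hm : 1 ≤ m)
    (S H A : Matrix (Fin m → ZMod 2) (Fin m → ZMod 2) ℚ)
    (hS : ∀ i j, S i j = if ∑ k, i k * j k = 0 then 1 else 0)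
    (hH : ∀ i j, H i j = if ∑ k, i k * j k = 0 then 1 else -1)
    (hA : ∀ i j, A i j = if i = 0 ∧ j = 0 then 1 else 0) :
    IsUnit S ∧ S⁻¹ = (1 / 2 ^ (m - 1) : ℚ) • H - A := by
  have S_eq : S = orthogonalityMatrix ℚ (dotProductBilin (ZMod 2) (ZMod 2)) := Matrix.ext hS
  have H_eq : H = (signMatrix ℚ (dotProductBilin (ZMod 2) (ZMod 2)))ᵀ := by
    ext i j
    simp [hH, signMatrix, signChar_apply, dotProduct, mul_comm]
  have A_eq : A = Matrix.single 0 0 1 := by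
    ext i j
    simp [hA, Matrix.single_apply, eq_comm]
  have scalar_eq : (1 / 2 ^ (m - 1) : ℚ) = 2 / Fintype.card (Fin m → ZMod 2) := by
    obtain ⟨n, rfl⟩ := Nat.exists_eq_add_of_le' hm
    rw [div_eq_div_iff (by simp) (by simp)]
    simp [pow_succ']
  rw [S_eq, H_eq, A_eq, scalar_eq]
  exact statement7_general (separatingLeft_dotProductBilin (ZMod 2) (Fin m))
end

section
/- Work in the polynomial ring ℤ[α_1,…,α_n,β_1,…,β_n]. For every n ≥ 1 the following identities hold: (1) T_1(α−β) = T_1(α) − T_1(β); (2) if n ≥ 2, T_2(α−β) = T_2(α) + T_2(β) − T_1(α)·T_1(β) + T_1(αβ); (3) if n ≥ 3, T_3(α−β) = T_3(α) − T_3(β) + T_1(α)·T_2(β) − T_1(β)·T_2(α) + T_1(α)·T_1(αβ) − T_1(β)·T_1(αβ) + T_1(αβ²) − T_1(α²β). -/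
/-- The `l`-th elementary symmetric polynomial of the values `v 0, …, v (n-1)`. -/
noncomputable def esym {R : Type*} [CommRing R] {n : ℕ} (l : ℕ) (v : Fin n → R) : R :=
  ∑ S ∈ Finset.powersetCard l (Finset.univ : Finset (Fin n)), ∏ i ∈ S, v i

/-- The variables `α_1, …, α_n` of `ℤ[α_1,…,α_n,β_1,…,β_n]`. -/
noncomputable def av (n : ℕ) : Fin n → MvPolynomial (Fin n ⊕ Fin n) ℤ :=
  fun i => MvPolynomial.X (Sum.inl i)

/-- The variables `β_1, …, β_n` of `ℤ[α_1,…,α_n,β_1,…,β_n]`. -/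
noncomputable def bv (n : ℕ) : Fin n → MvPolynomial (Fin n ⊕ Fin n) ℤ :=
  fun i => MvPolynomial.X (Sum.inr i)

/-!
Splitting off one index `x` gives `e_{k+1}(v, v_x) = e_{k+1}(v) + v_x e_k(v)`, which reduces each
identity for `k` to the one for `k - 1` by induction on the index multiset. Working with multisets
of indices avoids any freshness condition on `x`.
-/

section Esymm

variable {R ι : Type*}

theorem esymm_one [CommSemiring R] (s : Multiset R) : s.esymm 1 = s.sum := by
  simp [Multiset.esymm, Multiset.powersetCard_one]

theorem esymm_zero_succ [CommSemiring R] (k : ℕ) : (0 : Multiset R).esymm (k + 1) = 0 := by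
  simp [Multiset.esymm, Multiset.powersetCard_zero_right]

theorem esymm_cons_succ [CommSemiring R] (x : R) (s : Multiset R) (k : ℕ) :
    (x ::ₘ s).esymm (k + 1) = s.esymm (k + 1) + x * s.esymm k := by
  simp [Multiset.esymm, Multiset.powersetCard_cons, Multiset.sum_map_mul_left]

variable [CommRing R] (s : Multiset ι) (a b : ι → R)

theorem esymm_two_map_sub :
    (s.map fun i => a i - b i).esymm 2
      = (s.map a).esymm 2 + (s.map b).esymm 2 - (s.map a).sum * (s.map b).sum
        + (s.map fun i => a i * b i).sum := by
  induction s using Multiset.induction_on with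
  | empty => simp [esymm_zero_succ]
  | cons x s ih =>
    simp only [Multiset.map_cons, Multiset.sum_cons, esymm_cons_succ, esymm_one, ih,
      Multiset.sum_map_sub]
    ring

theorem esymm_three_map_sub :
    (s.map fun i => a i - b i).esymm 3
      = (s.map a).esymm 3 - (s.map b).esymm 3
        + (s.map a).sum * (s.map b).esymm 2 - (s.map b).sum * (s.map a).esymm 2
        + (s.map a).sum * (s.map fun i => a i * b i).sum
        - (s.map b).sum * (s.map fun i => a i * b i).sum
        + (s.map fun i => a i * b i ^ 2).sum - (s.map fun i => a i ^ 2 * b i).sum := by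
  induction s using Multiset.induction_on with
  | empty => simp [esymm_zero_succ]
  | cons x s ih =>
    simp only [Multiset.map_cons, Multiset.sum_cons, esymm_cons_succ, esymm_one, ih,
      esymm_two_map_sub]
    ring

end Esymm

section Esym

variable {R : Type*} [CommRing R] {n : ℕ}

theorem esym_eq_esymm (l : ℕ) (v : Fin n → R) :
    esym l v = (Finset.univ.val.map v).esymm l :=
  (Finset.esymm_map_val v Finset.univ l).symm

theorem statement8_general (a b : Fin n → R) :
    (esym 1 (fun i => a i - b i) = esym 1 a - esym 1 b) ∧
    (esym 2 (fun i => a i - b i)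
        = esym 2 a + esym 2 b - esym 1 a * esym 1 b + esym 1 (fun i => a i * b i)) ∧
    (esym 3 (fun i => a i - b i)
        = esym 3 a - esym 3 b + esym 1 a * esym 2 b - esym 1 b * esym 2 a
          + esym 1 a * esym 1 (fun i => a i * b i)
          - esym 1 b * esym 1 (fun i => a i * b i)
          + esym 1 (fun i => a i * b i ^ 2)
          - esym 1 (fun i => a i ^ 2 * b i)) := by
  simp only [esym_eq_esymm, esymm_one]
  exact ⟨Multiset.sum_map_sub, esymm_two_map_sub _ a b, esymm_three_map_sub _ a b⟩

end Esym

theorem statement8 (n : ℕ) (hn : 1 ≤ n) :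
    (esym 1 (fun i => av n i - bv n i) = esym 1 (av n) - esym 1 (bv n)) ∧
    (2 ≤ n →
      esym 2 (fun i => av n i - bv n i)
        = esym 2 (av n) + esym 2 (bv n) - esym 1 (av n) * esym 1 (bv n)
          + esym 1 (fun i => av n i * bv n i)) ∧
    (3 ≤ n →
      esym 3 (fun i => av n i - bv n i)
        = esym 3 (av n) - esym 3 (bv n) + esym 1 (av n) * esym 2 (bv n)
          - esym 1 (bv n) * esym 2 (av n)
          + esym 1 (av n) * esym 1 (fun i => av n i * bv n i)
          - esym 1 (bv n) * esym 1 (fun i => av n i * bv n i)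
          + esym 1 (fun i => av n i * bv n i ^ 2)
          - esym 1 (fun i => av n i ^ 2 * bv n i)) := by
  obtain ⟨h₁, h₂, h₃⟩ := statement8_general (av n) (bv n)
  exact ⟨h₁, fun _ => h₂, fun _ => h₃⟩
end

section
/- Let δ21 = X² + 2X + 2 and δ41 = X⁴ + 2X³ + 2X² + 4X + 4. Then for every odd n ≥ 3: F_2(n,0,0,0) = 2^{n−3} − (1/8)·(2ρ_n(δ21) + ρ_n(δ41)); F_2(n,0,1,0) = F_2(n,0,0,1) = 2^{n−3} + (1/8)·ρ_n(δ41); F_2(n,0,1,1) = 2^{n−3} − (1/8)·(−2ρ_n(δ21) + ρ_n(δ41)); and, writing (c,d) for the pair with F_2(n,t1,t2,t3) = 2^{n−3} − (1/8)·(c·ρ_n(δ21) + d·ρ_n(δ41)): F_2(n,1,0,0) has (c,d) = (2,1) if n ≡ 1 (mod 4) and (0,−1) if n ≡ 3 (mod 4); F_2(n,1,1,0) has (c,d) = (−2,1) if n ≡ 1 (mod 4) and (0,−1) if n ≡ 3 (mod 4); F_2(n,1,0,1) has (c,d) = (0,−1) if n ≡ 1 (mod 4) and (−2,1) if n ≡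 3 (mod 4); F_2(n,1,1,1) has (c,d) = (0,−1) if n ≡ 1 (mod 4) and (2,1) if n ≡ 3 (mod 4). All equalities are between complex numbers, the counts being viewed in ℂ. -/
/-!
Let `U = (1 + xF₂[x]) / x⁴ ≅ ℤ/4 × ℤ/2`. Sending a monic `f ∈ F₂[X]` to the class of its reversal
in `U` is multiplicative and remembers exactly the three coefficients of `f` after the leading one.
When `f` is the field polynomial of `a ∈ K` these are `T₁(a), T₂(a), T₃(a)`, so by orthogonality the
counts are combinations of the sums of `χ(field polynomial of a)` over `a ∈ K`, for the eight
characters `χ` of `U`.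

A monic `f` of degree `n` is the field polynomial of exactly `Λ(f)` elements of `K`, so such a sum
is the `n`-th coefficient of `X L'/L`, where `L` is the `L`-function of `χ`. For `χ ≠ 1`,
`L = (1 - αX)(1 - βX)` and the sum is `-(αⁿ + βⁿ)`. If `χ(1 + x) ≠ -1` then `α` and `β` are roots of
`δ21` or `δ41`, or zero; if `χ(1 + x) = -1` then `α = -β`, and the sum vanishes for odd `n`.
-/

open Polynomial

/-- `ρ_n(γ)`: the sum of the `n`-th powers of the complex roots of `γ ∈ ℤ[X]`,
counted with multiplicity. -/
noncomputable def rho (n : ℕ) (γ : Polynomial ℤ) : ℂ :=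
  ((γ.map (Int.castRingHom ℂ)).roots.map (· ^ n)).sum

/-- `F_2(n,t₁,t₂,t₃)`: the number of `a` in the field `K` (of `2^n` elements)
with `T_k(a) = t_k` for `k = 1,2,3`. -/
noncomputable def cnt3 (n : ℕ) (K : Type) [Field K] [Fintype K] (t1 t2 t3 : K) : ℕ :=
  Nat.card {a : K // traceFn 2 n 1 a = t1 ∧ traceFn 2 n 2 a = t2 ∧ traceFn 2 n 3 a = t3}

noncomputable def d21 : Polynomial ℤ := X ^ 2 + 2 * X + 2
noncomputable def d41 : Polynomial ℤ := X ^ 4 + 2 * X ^ 3 + 2 * X ^ 2 + 4 * X + 4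

section VonMangoldt

open UniqueFactorizationMonoid

variable {F : Type*} [Field F]

open scoped Classical in
/-- The finite set of monic divisors of a nonzero polynomial over a field, as the products of the
submultisets of its monic irreducible factors. -/
noncomputable def monicDivisors (f : F[X]) : Finset F[X] :=
  ((normalizedFactors f).powerset.map Multiset.prod).toFinset

open scoped Classical in
/-- The von Mangoldt function of `F[X]`: its value at a power of an irreducible polynomial `P` is
`deg P`, and it vanishes at every other polynomial. -/
noncomputable def polyVonMangoldt (f : F[X]) : ℕ :=
  if IsPrimePow f then (radical f).natDegree else 0

open scoped Classical in
lemma monic_of_mem_normalizedFactors {f P : F[X]} (hP : P ∈ normalizedFactors f) : P.Monic := by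
  rw [← normalize_normalized_factor P hP]
  exact monic_normalize (irreducible_of_normalized_factor P hP).ne_zero

open scoped Classical in
lemma prod_normalizedFactors_eq_of_monic {f : F[X]} (hf : f.Monic) :
    (normalizedFactors f).prod = f := by
  rw [prod_normalizedFactors_eq hf.ne_zero, hf.normalize_eq_self]

lemma mem_monicDivisors {f g : F[X]} (hf : f.Monic) :
    g ∈ monicDivisors f ↔ g.Monic ∧ g ∣ f := by
  classical
  simp only [monicDivisors, Multiset.mem_toFinset, Multiset.mem_map, Multiset.mem_powerset]
  constructor
  · rintro ⟨s, hs, rfl⟩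
    have hmonic : (s.map id).prod.Monic := monic_multiset_prod_of_monic _ _ fun P hP ↦
      monic_of_mem_normalizedFactors (Multiset.mem_of_le hs hP)
    rw [Multiset.map_id] at hmonic
    refine ⟨hmonic, ?_⟩
    rw [← prod_normalizedFactors_eq_of_monic hf]
    exact Multiset.prod_dvd_prod_of_le hs
  · rintro ⟨hg, hgf⟩
    exact ⟨normalizedFactors g,
      (dvd_iff_normalizedFactors_le_normalizedFactors hg.ne_zero hf.ne_zero).1 hgf,
      prod_normalizedFactors_eq_of_monic hg⟩

lemma polyVonMangoldt_pow {P : F[X]} (hP : P.Monic) (hi : Irreducible P) {j : ℕ} (hj : j ≠ 0) :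
    polyVonMangoldt (P ^ j) = P.natDegree := by
  classical
  rw [polyVonMangoldt, if_pos (hi.prime.isPrimePow.pow hj), radical_pow_of_prime hi.prime hj,
    hP.normalize_eq_self]

lemma exists_monic_irreducible_pow_eq {f : F[X]} (hf : f.Monic) (h : IsPrimePow f) :
    ∃ P : F[X], ∃ j : ℕ, P.Monic ∧ Irreducible P ∧ j ≠ 0 ∧ P ^ j = f := by
  classical
  obtain ⟨P, j, hP, hj, rfl⟩ := h
  have hPn : (normalize P).Monic := monic_normalize hP.ne_zero
  exact ⟨normalize P, j, hPn, (normalize_associated P).irreducible_iff.2 hP.irreducible, hj.ne',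
    eq_of_monic_of_associated (hPn.pow j) hf (normalize_associated P).pow_pow⟩

open scoped Classical in
lemma natDegree_eq_sum_count_mul_natDegree {f : F[X]} (hf : f.Monic) :
    f.natDegree =
      ∑ P ∈ (normalizedFactors f).toFinset, (normalizedFactors f).count P * P.natDegree := by
  conv_lhs => rw [← prod_normalizedFactors_eq_of_monic hf]
  rw [natDegree_multiset_prod_of_monic _ fun P hP ↦ monic_of_mem_normalizedFactors hP,
    Finset.sum_multiset_map_count]
  simp only [smul_eq_mul]

open scoped Classical in
lemma pow_dvd_iff_le_count {f P : F[X]} (hf : f ≠ 0) (hP : P.Monic) (hi : Irreducible P) {j : ℕ} :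
    P ^ j ∣ f ↔ j ≤ (normalizedFactors f).count P := by
  rw [dvd_iff_normalizedFactors_le_normalizedFactors (pow_ne_zero _ hi.ne_zero) hf,
    normalizedFactors_of_irreducible_pow hi, hP.normalize_eq_self,
    Multiset.le_count_iff_replicate_le]

lemma pow_eq_pow_iff_of_monic_irreducible {P Q : F[X]} {i j : ℕ} (hP : P.Monic)
    (hPi : Irreducible P) (hQ : Q.Monic) (hQi : Irreducible Q) (hi : i ≠ 0) :
    P ^ i = Q ^ j ↔ P = Q ∧ i = j := by
  refine ⟨fun h ↦ ?_, by rintro ⟨rfl, rfl⟩; rfl⟩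
  have hPQ : P = Q := eq_of_monic_of_associated hP hQ <| hPi.associated_of_dvd hQi <|
    hPi.prime.dvd_of_dvd_pow (h ▸ dvd_pow_self P hi)
  subst hPQ
  refine ⟨rfl, Nat.eq_of_mul_eq_mul_right hPi.natDegree_pos ?_⟩
  rw [← hP.natDegree_pow, h, hP.natDegree_pow]

open scoped Classical in
lemma sum_polyVonMangoldt_monicDivisors_eq_sum_sigma {f : F[X]} (hf : f.Monic) :
    ∑ g ∈ monicDivisors f, polyVonMangoldt g =
      ∑ x ∈ (normalizedFactors f).toFinset.sigma
        fun P ↦ Finset.Icc 1 ((normalizedFactors f).count P), x.1.natDegree := by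
  have hfactor : ∀ x ∈ (normalizedFactors f).toFinset.sigma
      fun P ↦ Finset.Icc 1 ((normalizedFactors f).count P),
      x.1.Monic ∧ Irreducible x.1 ∧ x.2 ≠ 0 ∧ x.2 ≤ (normalizedFactors f).count x.1 := by
    intro x hx
    simp only [Finset.mem_sigma, Multiset.mem_toFinset, Finset.mem_Icc] at hx
    exact ⟨monic_of_mem_normalizedFactors hx.1, irreducible_of_normalized_factor _ hx.1,
      Nat.one_le_iff_ne_zero.1 hx.2.1, hx.2.2⟩
  symm
  refine Finset.sum_of_injOn (fun x ↦ x.1 ^ x.2) ?_ ?_ ?_ ?_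
  · rintro ⟨P, i⟩ hx ⟨Q, j⟩ hy h
    obtain ⟨hP, hPi, hi, -⟩ := hfactor _ hx
    obtain ⟨hQ, hQi, -, -⟩ := hfactor _ hy
    obtain ⟨rfl, rfl⟩ := (pow_eq_pow_iff_of_monic_irreducible hP hPi hQ hQi hi).1 h
    rfl
  · intro x hx
    obtain ⟨hP, hPi, -, hle⟩ := hfactor x hx
    exact (mem_monicDivisors hf).2 ⟨hP.pow _, (pow_dvd_iff_le_count hf.ne_zero hP hPi).2 hle⟩
  · intro g hg hnot
    obtain ⟨hgm, hgf⟩ := (mem_monicDivisors hf).1 hg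
    refine if_neg fun hpow ↦ hnot ?_
    obtain ⟨P, j, hP, hPi, hj, rfl⟩ := exists_monic_irreducible_pow_eq hgm hpow
    have hle := (pow_dvd_iff_le_count hf.ne_zero hP hPi).1 hgf
    refine ⟨⟨P, j⟩, ?_, rfl⟩
    simp only [Finset.coe_sigma, Set.mem_sigma_iff, Finset.mem_coe, Multiset.mem_toFinset,
      Finset.mem_Icc]
    exact ⟨Multiset.count_pos.1 (by omega), by omega, hle⟩
  · intro x hx
    obtain ⟨hP, hPi, hj, -⟩ := hfactor x hx
    exact (polyVonMangoldt_pow hP hPi hj).symm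

lemma sum_polyVonMangoldt_monicDivisors {f : F[X]} (hf : f.Monic) :
    ∑ g ∈ monicDivisors f, polyVonMangoldt g = f.natDegree := by
  rw [sum_polyVonMangoldt_monicDivisors_eq_sum_sigma hf, Finset.sum_sigma,
    natDegree_eq_sum_count_mul_natDegree hf]
  simp only [Finset.sum_const, Nat.card_Icc, Nat.add_sub_cancel, smul_eq_mul]

end VonMangoldt

lemma reverse_mul_X_add_C {F : Type*} [Field F] {f : F[X]} (hf : f ≠ 0) (a : F) :
    (f * X + C a).reverse = f.reverse + C a * X ^ (f.natDegree + 1) := by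
  rw [reverse_add_C, reverse_mul_X, natDegree_mul_X hf]

section MonicSums

variable {F : Type*} [Field F] [Fintype F]

open scoped Classical in
/-- The finite set of monic polynomials of degree `d` over a finite field, generated by appending
constant terms. -/
noncomputable def monicsOfDegree (F : Type*) [Field F] [Fintype F] : ℕ → Finset F[X]
  | 0 => {1}
  | d + 1 => (monicsOfDegree F d ×ˢ Finset.univ).image fun x ↦ x.1 * X + C x.2

lemma mem_monicsOfDegree {d : ℕ} {f : F[X]} :
    f ∈ monicsOfDegree F d ↔ f.Monic ∧ f.natDegree = d := by
  classical
  induction d generalizing f with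
  | zero =>
    rw [monicsOfDegree, Finset.mem_singleton]
    exact ⟨by rintro rfl; exact ⟨monic_one, natDegree_one⟩, fun h ↦ h.1.natDegree_eq_zero.1 h.2⟩
  | succ d ih =>
    simp only [monicsOfDegree, Finset.mem_image, Finset.mem_product, Finset.mem_univ, and_true,
      Prod.exists, ih]
    constructor
    · rintro ⟨g, a, ⟨hg, hgd⟩, rfl⟩
      have hgX : (g * X).Monic := hg.mul monic_X
      have hdeg : (g * X).natDegree = d + 1 := by rw [natDegree_mul_X hg.ne_zero, hgd]
      refine ⟨hgX.add_of_left ?_, by rw [natDegree_add_C, hdeg]⟩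
      rw [degree_eq_natDegree hgX.ne_zero, hdeg]
      exact degree_C_le.trans_lt (by exact_mod_cast d.succ_pos)
    · rintro ⟨hf, hfd⟩
      have hdeg : f.divX.natDegree = d := by rw [natDegree_divX_eq_natDegree_tsub_one, hfd]; rfl
      refine ⟨f.divX, f.coeff 0, ⟨?_, hdeg⟩, divX_mul_X_add f⟩
      rwa [Monic, leadingCoeff, hdeg, coeff_divX, ← hfd]

variable {R : Type*}

lemma sum_monicsOfDegree_zero [AddCommMonoid R] (φ : F[X] → R) :
    ∑ f ∈ monicsOfDegree F 0, φ f = φ 1 :=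
  Finset.sum_singleton φ 1

lemma sum_monicsOfDegree_succ [AddCommMonoid R] (φ : F[X] → R) (d : ℕ) :
    ∑ f ∈ monicsOfDegree F (d + 1), φ f = ∑ f ∈ monicsOfDegree F d, ∑ a, φ (f * X + C a) := by
  classical
  rw [monicsOfDegree, Finset.sum_image, Finset.sum_product]
  rintro ⟨f, a⟩ - ⟨g, b⟩ - h
  have hab : a = b := by simpa using congrArg (coeff · 0) h
  subst hab
  obtain rfl : f = g := mul_right_cancel₀ X_ne_zero (add_right_cancel h)
  rfl

lemma sum_monicsOfDegree_reverse_succ [AddCommMonoid R] (φ : F[X] → R) (d : ℕ) :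
    ∑ f ∈ monicsOfDegree F (d + 1), φ f.reverse =
      ∑ f ∈ monicsOfDegree F d, ∑ a, φ (f.reverse + C a * X ^ (d + 1)) := by
  rw [sum_monicsOfDegree_succ]
  refine Finset.sum_congr rfl fun f hf ↦ Finset.sum_congr rfl fun a _ ↦ ?_
  obtain ⟨hfm, hfd⟩ := mem_monicsOfDegree.1 hf
  rw [reverse_mul_X_add_C hfm.ne_zero, hfd]

lemma sum_monicsOfDegree_one_reverse [AddCommMonoid R] (φ : F[X] → R) :
    ∑ f ∈ monicsOfDegree F 1, φ f.reverse = ∑ a, φ (1 + C a * X ^ 1) := by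
  rw [sum_monicsOfDegree_reverse_succ, sum_monicsOfDegree_zero, ← C_1, reverse_C]

lemma sum_monicsOfDegree_two_reverse [AddCommMonoid R] (φ : F[X] → R) :
    ∑ f ∈ monicsOfDegree F 2, φ f.reverse = ∑ a, ∑ b, φ (1 + C a * X ^ 1 + C b * X ^ 2) := by
  rw [sum_monicsOfDegree_reverse_succ,
    sum_monicsOfDegree_one_reverse fun r ↦ ∑ b, φ (r + C b * X ^ (1 + 1))]

lemma sum_monicsOfDegree_three_reverse [AddCommMonoid R] (φ : F[X] → R) :
    ∑ f ∈ monicsOfDegree F 3, φ f.reverse =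
      ∑ a, ∑ b, ∑ c, φ (1 + C a * X ^ 1 + C b * X ^ 2 + C c * X ^ 3) := by
  rw [sum_monicsOfDegree_reverse_succ,
    sum_monicsOfDegree_two_reverse fun r ↦ ∑ c, φ (r + C c * X ^ (2 + 1))]

end MonicSums

section LFunction

open Finset.HasAntidiagonal (antidiagonal mem_antidiagonal)

variable {F : Type*} [Field F] [Fintype F] {R : Type*} [CommRing R]

/-- The `L`-function `Σ χ(f) T^{deg f}`, over monic `f`, of a multiplicative function on `F[X]`. -/
noncomputable def polyLFunction (χ : F[X] →* R) : PowerSeries R :=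
  PowerSeries.mk fun n ↦ ∑ f ∈ monicsOfDegree F n, χ f

/-- The sum of `Λ(f) χ(f)` over monic `f` of degree `n`; these sums are the coefficients of the
logarithmic derivative of the `L`-function of `χ`. -/
noncomputable def vonMangoldtSum (χ : F[X] →* R) (n : ℕ) : R :=
  ∑ f ∈ monicsOfDegree F n, polyVonMangoldt f * χ f

lemma sum_monicsOfDegree_sum_monicDivisors (φ : F[X] → F[X] → R) (n : ℕ) :
    ∑ f ∈ monicsOfDegree F n, ∑ g ∈ monicDivisors f, φ f g =
      ∑ p ∈ antidiagonal n, ∑ g ∈ monicsOfDegree F p.1, ∑ h ∈ monicsOfDegree F p.2,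
        φ (g * h) g := by
  simp only [← Finset.sum_product' (monicsOfDegree F _)]
  rw [Finset.sum_sigma', Finset.sum_sigma']
  symm
  refine Finset.sum_bij (fun x _ ↦ ⟨x.2.1 * x.2.2, x.2.1⟩) ?_ ?_ ?_ (fun _ _ ↦ rfl)
  · rintro ⟨⟨i, j⟩, g, h⟩ hx
    simp only [Finset.mem_sigma, mem_antidiagonal, Finset.mem_product,
      mem_monicsOfDegree] at hx ⊢
    obtain ⟨hij, ⟨hg, rfl⟩, hh, rfl⟩ := hx
    exact ⟨⟨hg.mul hh, (hg.natDegree_mul hh).trans hij⟩,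
      (mem_monicDivisors (hg.mul hh)).2 ⟨hg, dvd_mul_right g h⟩⟩
  · rintro ⟨⟨i, j⟩, g, h⟩ hx ⟨⟨i', j'⟩, g', h'⟩ hx' heq
    simp only [Finset.mem_sigma, Finset.mem_product, mem_monicsOfDegree] at hx hx'
    obtain ⟨-, ⟨hg, rfl⟩, -, rfl⟩ := hx
    obtain ⟨-, ⟨-, rfl⟩, -, rfl⟩ := hx'
    simp only [Sigma.mk.injEq, heq_eq_eq] at heq
    obtain ⟨hmul, rfl⟩ := heq
    rw [mul_left_cancel₀ hg.ne_zero hmul]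
  · rintro ⟨f, g⟩ hx
    simp only [Finset.mem_sigma, mem_monicsOfDegree] at hx
    obtain ⟨⟨hf, hfd⟩, hgf⟩ := hx
    obtain ⟨hg, h, rfl⟩ := (mem_monicDivisors hf).1 hgf
    have hh : h.Monic := hg.of_mul_monic_left hf
    refine ⟨⟨(g.natDegree, h.natDegree), g, h⟩, ?_, rfl⟩
    simp only [Finset.mem_sigma, mem_antidiagonal, Finset.mem_product, mem_monicsOfDegree]
    exact ⟨(hg.natDegree_mul hh).symm.trans hfd, ⟨hg, trivial⟩, hh, trivial⟩

lemma X_mul_derivative_polyLFunction (χ : F[X] →* R) :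
    PowerSeries.X * PowerSeries.derivative R (polyLFunction χ) =
      PowerSeries.mk (vonMangoldtSum χ) * polyLFunction χ := by
  ext n
  have hlhs : PowerSeries.coeff n
      (PowerSeries.X * PowerSeries.derivative R (polyLFunction χ)) =
        ∑ f ∈ monicsOfDegree F n, (f.natDegree : R) * χ f := by
    have hdeg : ∑ f ∈ monicsOfDegree F n, (f.natDegree : R) * χ f =
        n * ∑ f ∈ monicsOfDegree F n, χ f := by
      rw [Finset.mul_sum]
      exact Finset.sum_congr rfl fun f hf ↦ by rw [(mem_monicsOfDegree.1 hf).2]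
    rw [hdeg]
    cases n with
    | zero => simp
    | succ n =>
      rw [PowerSeries.coeff_succ_X_mul, PowerSeries.coeff_derivative, polyLFunction,
        PowerSeries.coeff_mk, Nat.cast_succ, mul_comm]
  calc PowerSeries.coeff n (PowerSeries.X * PowerSeries.derivative R (polyLFunction χ))
    _ = ∑ f ∈ monicsOfDegree F n, ∑ g ∈ monicDivisors f, (polyVonMangoldt g : R) * χ f := by
        rw [hlhs]
        refine Finset.sum_congr rfl fun f hf ↦ ?_
        rw [← sum_polyVonMangoldt_monicDivisors (mem_monicsOfDegree.1 hf).1, Nat.cast_sum,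
          Finset.sum_mul]
    _ = ∑ p ∈ antidiagonal n, ∑ g ∈ monicsOfDegree F p.1, ∑ h ∈ monicsOfDegree F p.2,
          (polyVonMangoldt g : R) * χ (g * h) :=
        sum_monicsOfDegree_sum_monicDivisors (fun f g ↦ (polyVonMangoldt g : R) * χ f) n
    _ = PowerSeries.coeff n (PowerSeries.mk (vonMangoldtSum χ) * polyLFunction χ) := by
        simp only [PowerSeries.coeff_mul, polyLFunction, vonMangoldtSum, PowerSeries.coeff_mk,
          Finset.sum_mul_sum, map_mul, mul_assoc]

end LFunction

section LogDerivative

variable {R : Type*} [CommRing R]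

lemma mk_pow_mul_one_sub_C_mul_X (α : R) :
    PowerSeries.mk (α ^ ·) * (1 - PowerSeries.C α * PowerSeries.X) = 1 := by
  ext n
  cases n with
  | zero => simp
  | succ n =>
    rw [mul_sub, mul_one, ← mul_assoc, mul_comm _ (PowerSeries.C α), mul_assoc, map_sub,
      PowerSeries.coeff_C_mul, PowerSeries.coeff_succ_mul_X]
    simp [pow_succ']

/-- `1 - Σ αⁿ Xⁿ = -αX / (1 - αX)` is `X` times the logarithmic derivative of `1 - αX`. -/
lemma X_mul_derivative_prod_one_sub_C_mul_X (s : Multiset R) :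
    PowerSeries.X * PowerSeries.derivative R
        (s.map fun α ↦ 1 - PowerSeries.C α * PowerSeries.X).prod =
      (s.map fun α ↦ 1 - PowerSeries.mk (α ^ ·)).sum *
        (s.map fun α ↦ 1 - PowerSeries.C α * PowerSeries.X).prod := by
  induction s using Multiset.induction with
  | empty => simp
  | cons α s ih =>
    have hα := mk_pow_mul_one_sub_C_mul_X α
    simp only [Multiset.map_cons, Multiset.prod_cons, Multiset.sum_cons, Derivation.leibniz,
      smul_eq_mul, map_sub, Derivation.map_one_eq_zero, PowerSeries.derivative_X,
      PowerSeries.derivative_C]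
    set P := (s.map fun α ↦ 1 - PowerSeries.C α * PowerSeries.X).prod
    linear_combination (1 - PowerSeries.C α * PowerSeries.X) * ih + P * hα

lemma coeff_eq_neg_sum_pow_of_X_mul_derivative_eq {p c : PowerSeries R} {s : Multiset R}
    (hp : PowerSeries.X * PowerSeries.derivative R c = p * c)
    (hc : c = (s.map fun α ↦ 1 - PowerSeries.C α * PowerSeries.X).prod) {n : ℕ} (hn : n ≠ 0) :
    PowerSeries.coeff n p = -(s.map (· ^ n)).sum := by
  have hunit : IsUnit c := by
    rw [PowerSeries.isUnit_iff_constantCoeff, hc, map_multiset_prod, Multiset.map_map]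
    simp
  have hpc : p = (s.map fun α ↦ 1 - PowerSeries.mk (α ^ ·)).sum := by
    refine hunit.mul_right_cancel ?_
    rw [← hp, hc, X_mul_derivative_prod_one_sub_C_mul_X]
  rw [hpc, map_multiset_sum, Multiset.map_map]
  simp [PowerSeries.coeff_one, hn]

end LogDerivative

section FieldPolynomial

variable {F : Type*} [Field F]

lemma eq_pow_of_forall_irreducible_dvd {f P : F[X]} (hf : f.Monic) (hP : P.natDegree ≠ 0)
    (h : ∀ Q : F[X], Q.Monic → Irreducible Q → Q ∣ f → Q = P) :
    f = P ^ (f.natDegree / P.natDegree) := by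
  classical
  have hrep : UniqueFactorizationMonoid.normalizedFactors f = Multiset.replicate _ P :=
    Multiset.eq_replicate_card.2 fun Q hQ ↦ h Q (monic_of_mem_normalizedFactors hQ)
      (UniqueFactorizationMonoid.irreducible_of_normalized_factor Q hQ)
      (UniqueFactorizationMonoid.dvd_of_mem_normalizedFactors hQ)
  have hpow := prod_normalizedFactors_eq_of_monic hf
  rw [hrep, Multiset.prod_replicate] at hpow
  rw [← hpow, natDegree_pow, Nat.mul_div_cancel _ (Nat.pos_of_ne_zero hP)]

variable (F) {K : Type*} [Field K] [Algebra F K]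

/-- The field polynomial of `a` in the extension `K / F`: the power of its minimal polynomial that
has degree `[K : F]`. -/
noncomputable def fieldPolynomial (a : K) : F[X] :=
  minpoly F a ^ (Module.finrank F K / (minpoly F a).natDegree)

variable [FiniteDimensional F K]

lemma monic_fieldPolynomial (a : K) : (fieldPolynomial F a).Monic :=
  (minpoly.monic (Algebra.IsIntegral.isIntegral a)).pow _

lemma natDegree_fieldPolynomial (a : K) :
    (fieldPolynomial F a).natDegree = Module.finrank F K := by
  rw [fieldPolynomial, natDegree_pow,
    Nat.div_mul_cancel (minpoly.degree_dvd (Algebra.IsIntegral.isIntegral a))]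

lemma fieldPolynomial_eq_pow_iff {P : F[X]} (hP : P.Monic) (hi : Irreducible P) {j : ℕ}
    (hj : (P ^ j).natDegree = Module.finrank F K) (a : K) :
    fieldPolynomial F a = P ^ j ↔ aeval a P = 0 := by
  have ha : IsIntegral F a := Algebra.IsIntegral.isIntegral a
  constructor
  · intro h
    have hroot : aeval a (P ^ j) = 0 := by
      rw [← h, fieldPolynomial, map_pow, minpoly.aeval, zero_pow]
      exact (Nat.div_pos (minpoly.natDegree_le a) (minpoly.natDegree_pos ha)).ne'
    rw [map_pow] at hroot
    exact eq_zero_of_pow_eq_zero hroot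
  · intro h
    rw [fieldPolynomial, ← minpoly.eq_of_irreducible_of_monic hi h hP, ← hj, natDegree_pow,
      Nat.mul_div_cancel _ hi.natDegree_pos]

lemma map_fieldPolynomial_eq_prod_automorphisms [IsGalois F K] (a : K) :
    (fieldPolynomial F a).map (algebraMap F K) = ∏ σ : Gal(K/F), (X - C (σ a)) := by
  set Q := MulSemiringAction.charpoly Gal(K/F) a with hQ
  have hQm : Q.Monic := MulSemiringAction.monic_charpoly _ a
  have hQd : Q.natDegree = Module.finrank F K := by
    rw [hQ, MulSemiringAction.charpoly_eq, natDegree_finsetProd_X_sub_C_eq_card,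
      Finset.card_univ, ← Nat.card_eq_fintype_card, IsGalois.card_aut_eq_finrank]
  obtain ⟨f, hfQ, hfd, hf⟩ := lifts_and_natDegree_eq_and_monic
    (Algebra.IsInvariant.charpoly_mem_lifts F K Gal(K/F) a) hQm
  rw [← hQ] at hfQ hfd
  have ha : IsIntegral F a := Algebra.IsIntegral.isIntegral a
  suffices hfP : f = fieldPolynomial F a by rw [← hfP, hfQ]; rfl
  rw [fieldPolynomial, ← hQd, ← hfd]
  refine eq_pow_of_forall_irreducible_dvd hf (minpoly.natDegree_pos ha).ne' fun P hP hi hPf ↦ ?_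
  have hPQ : P.map (algebraMap F K) ∣ Q := hfQ ▸ Polynomial.map_dvd _ hPf
  obtain ⟨b, hb⟩ := ((MulSemiringAction.splits_charpoly _ a).of_dvd hQm.ne_zero
    hPQ).exists_eval_eq_zero (by rw [degree_map]; exact hi.degree_pos.ne')
  obtain ⟨σ, rfl⟩ : ∃ σ : Gal(K/F), σ a = b := by
    have hQb := eval_eq_zero_of_dvd_of_eval_eq_zero hPQ hb
    rw [hQ, MulSemiringAction.charpoly_eq, eval_prod, Finset.prod_eq_zero_iff] at hQb
    obtain ⟨σ, -, hσ⟩ := hQb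
    rw [eval_sub, eval_X, eval_C, sub_eq_zero] at hσ
    exact ⟨σ, hσ.symm⟩
  rw [eval_map_algebraMap] at hb
  rw [minpoly.eq_of_irreducible_of_monic hi hb hP, minpoly.algEquiv_eq]

end FieldPolynomial

section FiniteField

variable (F : Type*) {K : Type*} [Field F] [Field K] [Algebra F K]

lemma map_fieldPolynomial_eq_prod_pow_card [Fintype F] [Finite K] (a : K) :
    (fieldPolynomial F a).map (algebraMap F K) =
      ∏ i ∈ Finset.range (Module.finrank F K), (X - C (a ^ Fintype.card F ^ i)) := by
  rw [map_fieldPolynomial_eq_prod_automorphisms, Finset.prod_range]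
  refine (Fintype.prod_bijective _ (FiniteField.bijective_frobeniusAlgEquivOfAlgebraic_pow F K)
    _ _ fun i ↦ ?_).symm
  rw [AlgEquiv.coe_pow, FiniteField.coe_frobeniusAlgEquivOfAlgebraic_iterate]

lemma algebraMap_coeff_reverse_fieldPolynomial [Fintype F] [Finite K] (a : K) {k : ℕ}
    (hk : k ≤ Module.finrank F K) :
    algebraMap F K ((fieldPolynomial F a).reverse.coeff k) =
      (-1) ^ k * traceFn (Fintype.card F) (Module.finrank F K) k a := by
  have hcoeff := Finset.prod_X_add_C_coeff (Finset.range (Module.finrank F K))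
    (fun i ↦ -a ^ Fintype.card F ^ i) (k := Module.finrank F K - k) (by simp)
  rw [coeff_reverse, natDegree_fieldPolynomial, revAt_le hk, ← coeff_map,
    map_fieldPolynomial_eq_prod_pow_card]
  simp only [sub_eq_add_neg, ← C_neg, hcoeff, Finset.card_range]
  rw [Nat.sub_sub_self hk, traceFn, Finset.mul_sum]
  refine Finset.sum_congr rfl fun S hS ↦ ?_
  rw [Finset.prod_neg, (Finset.mem_powersetCard.1 hS).2]

variable {F}

lemma card_rootSet_of_irreducible [Finite F] [Finite K] {P : F[X]} (hi : Irreducible P)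
    (hd : P.natDegree ∣ Module.finrank F K) : Nat.card (P.rootSet K) = P.natDegree := by
  have := Fintype.ofFinite K
  have hdvd : P ∣ X ^ Fintype.card K - X := by
    have := hi.natDegree_dvd_iff_dvd_X_pow_card_pow_sub_X.1 hd
    rwa [← Module.natCard_eq_pow_finrank, Nat.card_eq_fintype_card] at this
  have hsplits : ((X ^ Fintype.card K - X : F[X]).map (algebraMap F K)).Splits :=
    (FiniteField.isSplittingField_sub K F).splits
  rw [Nat.card_eq_fintype_card]
  exact card_rootSet_eq_natDegree (PerfectField.separable_of_irreducible hi) <|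
    hsplits.of_dvd (Polynomial.map_ne_zero
      (FiniteField.X_pow_card_sub_X_ne_zero F Fintype.one_lt_card)) (Polynomial.map_dvd _ hdvd)

lemma card_fieldPolynomial_eq [Finite F] [Finite K] {f : F[X]} (hf : f.Monic)
    (hd : f.natDegree = Module.finrank F K) :
    Nat.card {a : K // fieldPolynomial F a = f} = polyVonMangoldt f := by
  by_cases hpow : IsPrimePow f
  · obtain ⟨P, j, hP, hi, hj, rfl⟩ := exists_monic_irreducible_pow_eq hf hpow
    rw [polyVonMangoldt_pow hP hi hj, ← card_rootSet_of_irreducible (K := K) hi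
      (hd ▸ natDegree_pow P j ▸ dvd_mul_left _ j)]
    refine Nat.card_congr (Equiv.subtypeEquivRight fun a ↦ ?_)
    rw [fieldPolynomial_eq_pow_iff F hP hi hd, mem_rootSet_of_ne hi.ne_zero]
  · have hempty : IsEmpty {a : K // fieldPolynomial F a = f} := by
      refine ⟨fun ⟨a, ha⟩ ↦ hpow ?_⟩
      have hint : IsIntegral F a := Algebra.IsIntegral.isIntegral a
      rw [← ha]
      exact (minpoly.irreducible hint).prime.isPrimePow.pow
        (Nat.div_pos (minpoly.natDegree_le a) (minpoly.natDegree_pos hint)).ne'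
    rw [Nat.card_of_isEmpty, polyVonMangoldt, if_neg hpow]

lemma sum_fieldPolynomial_eq_vonMangoldtSum [Fintype F] [Fintype K] {R : Type*} [CommRing R]
    (χ : F[X] →* R) :
    ∑ a : K, χ (fieldPolynomial F a) = vonMangoldtSum χ (Module.finrank F K) := by
  classical
  rw [vonMangoldtSum, ← Finset.sum_fiberwise_of_maps_to (g := fieldPolynomial F)
    fun a _ ↦ mem_monicsOfDegree.2 ⟨monic_fieldPolynomial F a, natDegree_fieldPolynomial F a⟩]
  refine Finset.sum_congr rfl fun f hf ↦ ?_
  obtain ⟨hfm, hfd⟩ := mem_monicsOfDegree.1 hf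
  rw [Finset.sum_congr rfl fun a ha ↦ congrArg χ (Finset.mem_filter.1 ha).2, Finset.sum_const,
    nsmul_eq_mul, ← card_fieldPolynomial_eq (K := K) hfm hfd, Nat.card_eq_fintype_card,
    Fintype.card_subtype]

end FiniteField

section TopCoefficients

lemma sum_zmod_two {M : Type*} [AddCommMonoid M] (φ : ZMod 2 → M) : ∑ a, φ a = φ 0 + φ 1 :=
  Fin.sum_univ_two φ

/-- The isomorphism `(1 + xF₂[x]) / x⁴ ≅ ℤ/4 × ℤ/2` sending `1 + x` to `(1, 0)` and `1 + x³` to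
`(0, 1)`, where `1 + ax + bx² + cx³` is given as `(a, b, c)`. -/
def unitLog (x : ZMod 2 × ZMod 2 × ZMod 2) : ZMod 4 × ZMod 2 :=
  (x.1.val + 2 * x.2.1.val, x.2.2 + x.1 * x.2.1)

lemma unitLog_bijective : Function.Bijective unitLog := by
  decide

lemma unitLog_mul (a b c a' b' c' : ZMod 2) :
    unitLog (a + a', b + a * a' + b', c + b * a' + a * b' + c') =
      unitLog (a, b, c) + unitLog (a', b', c') := by
  decide +revert

/-- The image under `unitLog` of the class modulo `x⁴` of a polynomial with constant term `1`. -/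
def truncLog (r : (ZMod 2)[X]) : ZMod 4 × ZMod 2 :=
  unitLog (r.coeff 1, r.coeff 2, r.coeff 3)

lemma truncLog_one : truncLog 1 = 0 := by
  rw [truncLog, ← C_1, coeff_C_succ, coeff_C_succ, coeff_C_succ]
  rfl

lemma truncLog_mul {r s : (ZMod 2)[X]} (hr : r.coeff 0 = 1) (hs : s.coeff 0 = 1) :
    truncLog (r * s) = truncLog r + truncLog s := by
  simp only [truncLog, ← unitLog_mul, coeff_mul,
    Finset.Nat.sum_antidiagonal_eq_sum_range_succ_mk, Finset.sum_range_succ, Finset.sum_range_zero,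
    Nat.reduceSub, hr, hs]
  congr 2
  · ring
  · congr 1 <;> ring

lemma coeff_zero_reverse_eq_one {f : (ZMod 2)[X]} (hf : f ≠ 0) : f.reverse.coeff 0 = 1 := by
  have hone : ∀ a : ZMod 2, a ≠ 0 → a = 1 := by decide
  rw [coeff_zero_reverse]
  exact hone _ (leadingCoeff_ne_zero.2 hf)

variable {R : Type*} [CommRing R]

/-- The multiplicative function on `F₂[X]` through which a character of `(1 + xF₂[x]) / x⁴` sees
the three coefficients of a polynomial that follow the leading one. -/
noncomputable def topChar (ψ : AddChar (ZMod 4 × ZMod 2) R) : (ZMod 2)[X] →* R where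
  toFun f := if f = 0 then 0 else ψ (truncLog f.reverse)
  map_one' := by
    rw [if_neg one_ne_zero, ← C_1, reverse_C, C_1, truncLog_one, AddChar.map_zero_eq_one]
  map_mul' f g := by
    by_cases hf : f = 0
    · rw [if_pos hf, hf, zero_mul, zero_mul, if_pos rfl]
    by_cases hg : g = 0
    · rw [if_pos hg, hg, mul_zero, mul_zero, if_pos rfl]
    rw [if_neg hf, if_neg hg, if_neg (mul_ne_zero hf hg), reverse_mul_of_domain,
      truncLog_mul (coeff_zero_reverse_eq_one hf) (coeff_zero_reverse_eq_one hg),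
      AddChar.map_add_eq_mul]

variable (ψ : AddChar (ZMod 4 × ZMod 2) R)

lemma topChar_apply {f : (ZMod 2)[X]} (hf : f ≠ 0) : topChar ψ f = ψ (truncLog f.reverse) :=
  if_neg hf

lemma coeff_polyLFunction_topChar (d : ℕ) :
    PowerSeries.coeff d (polyLFunction (topChar ψ)) =
      ∑ f ∈ monicsOfDegree (ZMod 2) d, ψ (truncLog f.reverse) := by
  rw [polyLFunction, PowerSeries.coeff_mk]
  exact Finset.sum_congr rfl fun f hf ↦ topChar_apply ψ (mem_monicsOfDegree.1 hf).1.ne_zero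

lemma coeff_zero_polyLFunction_topChar :
    PowerSeries.coeff 0 (polyLFunction (topChar ψ)) = 1 := by
  rw [polyLFunction, PowerSeries.coeff_mk, sum_monicsOfDegree_zero, map_one]

lemma truncLog_of_cubic (a b c : ZMod 2) :
    truncLog (1 + C a * X ^ 1 + C b * X ^ 2 + C c * X ^ 3) = unitLog (a, b, c) := by
  simp [truncLog, coeff_one, coeff_X_pow]

lemma coeff_one_polyLFunction_topChar :
    PowerSeries.coeff 1 (polyLFunction (topChar ψ)) = 1 + ψ (1, 0) := by
  have hlog (a : ZMod 2) : truncLog (1 + C a * X ^ 1) = unitLog (a, 0, 0) := by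
    simpa using truncLog_of_cubic a 0 0
  rw [coeff_polyLFunction_topChar, sum_monicsOfDegree_one_reverse fun r ↦ ψ (truncLog r)]
  simp only [hlog]
  rw [sum_zmod_two, ← ψ.map_zero_eq_one]
  rfl

lemma coeff_two_polyLFunction_topChar :
    PowerSeries.coeff 2 (polyLFunction (topChar ψ)) =
      1 + ψ (1, 0) + ψ (1, 0) ^ 2 + ψ (1, 0) ^ 3 * ψ (0, 1) := by
  have hlog (a b : ZMod 2) : truncLog (1 + C a * X ^ 1 + C b * X ^ 2) = unitLog (a, b, 0) := by
    simpa using truncLog_of_cubic a b 0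
  rw [coeff_polyLFunction_topChar, sum_monicsOfDegree_two_reverse fun r ↦ ψ (truncLog r)]
  simp only [hlog]
  calc ∑ a, ∑ b, ψ (unitLog (a, b, 0))
    _ = ψ 0 + ψ (2 • (1, 0)) + (ψ (1, 0) + ψ (3 • (1, 0) + (0, 1))) := by
        rw [sum_zmod_two, sum_zmod_two, sum_zmod_two]
        rfl
    _ = _ := by
        rw [ψ.map_zero_eq_one, ψ.map_add_eq_mul, ψ.map_nsmul_eq_pow, ψ.map_nsmul_eq_pow]
        ring

variable {ψ} [IsDomain R]

lemma coeff_polyLFunction_topChar_of_ne_one (hψ : ψ ≠ 1) (d : ℕ) :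
    PowerSeries.coeff (d + 3) (polyLFunction (topChar ψ)) = 0 := by
  induction d with
  | zero =>
    rw [coeff_polyLFunction_topChar, zero_add,
      sum_monicsOfDegree_three_reverse fun r ↦ ψ (truncLog r)]
    simp only [truncLog_of_cubic, ← Fintype.sum_prod_type']
    exact (unitLog_bijective.sum_comp ψ).trans (AddChar.sum_eq_zero_of_ne_one hψ)
  | succ d ih =>
    have hlog (r : (ZMod 2)[X]) (a : ZMod 2) :
        truncLog (r + C a * X ^ (d + 3 + 1)) = truncLog r := by
      simp [truncLog, coeff_X_pow]
    rw [coeff_polyLFunction_topChar, show d + 1 + 3 = d + 3 + 1 by ring,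
      sum_monicsOfDegree_reverse_succ fun r ↦ ψ (truncLog r)]
    simp only [hlog, Finset.sum_const, ← Finset.smul_sum]
    rw [← coeff_polyLFunction_topChar, ih, smul_zero]

lemma polyLFunction_topChar_of_ne_one (hψ : ψ ≠ 1) {α β : R} (hadd : α + β = -(1 + ψ (1, 0)))
    (hmul : α * β = 1 + ψ (1, 0) + ψ (1, 0) ^ 2 + ψ (1, 0) ^ 3 * ψ (0, 1)) :
    polyLFunction (topChar ψ) =
      (({α, β} : Multiset R).map fun γ ↦ 1 - PowerSeries.C γ * PowerSeries.X).prod := by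
  have hprod : (({α, β} : Multiset R).map fun γ ↦ 1 - PowerSeries.C γ * PowerSeries.X).prod =
      1 - PowerSeries.C (α + β) * PowerSeries.X + PowerSeries.C (α * β) * PowerSeries.X ^ 2 := by
    rw [Multiset.insert_eq_cons, Multiset.map_cons, Multiset.prod_cons, Multiset.map_singleton,
      Multiset.prod_singleton, map_add, map_mul]
    ring
  have hcoeff (n : ℕ) :
      PowerSeries.coeff n (1 - PowerSeries.C (α + β) * PowerSeries.X +
          PowerSeries.C (α * β) * PowerSeries.X ^ 2) =
        (if n = 0 then 1 else 0) - (α + β) * (if n = 1 then 1 else 0) +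
          α * β * (if n = 2 then 1 else 0) := by
    simp only [map_add (PowerSeries.coeff n), map_sub, PowerSeries.coeff_C_mul,
      PowerSeries.coeff_one, PowerSeries.coeff_X, PowerSeries.coeff_X_pow]
  rw [hprod]
  ext n
  rw [hcoeff, hadd, hmul]
  match n with
  | 0 => simp [coeff_zero_polyLFunction_topChar]
  | 1 => simp [coeff_one_polyLFunction_topChar]
  | 2 => simp [coeff_two_polyLFunction_topChar]
  | n + 3 => simp [coeff_polyLFunction_topChar_of_ne_one hψ]

lemma vonMangoldtSum_topChar_of_ne_one (hψ : ψ ≠ 1) {α β : R} (hadd : α + β = -(1 + ψ (1, 0)))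
    (hmul : α * β = 1 + ψ (1, 0) + ψ (1, 0) ^ 2 + ψ (1, 0) ^ 3 * ψ (0, 1)) {n : ℕ} (hn : n ≠ 0) :
    vonMangoldtSum (topChar ψ) n = -(α ^ n + β ^ n) := by
  have h := coeff_eq_neg_sum_pow_of_X_mul_derivative_eq (X_mul_derivative_polyLFunction (topChar ψ))
    (polyLFunction_topChar_of_ne_one hψ hadd hmul) hn
  rwa [PowerSeries.coeff_mk, Multiset.insert_eq_cons, Multiset.map_cons, Multiset.sum_cons,
    Multiset.map_singleton, Multiset.sum_singleton] at h

end TopCoefficients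

section Roots

open Complex (I I_sq)

lemma rho_eq_sum_pow {γ : ℤ[X]} {s : Multiset ℂ}
    (h : γ.map (Int.castRingHom ℂ) = (s.map fun α ↦ X - C α).prod) (n : ℕ) :
    rho n γ = (s.map (· ^ n)).sum := by
  rw [rho, h, roots_multiset_prod_X_sub_C]

lemma rho_d21 (n : ℕ) : rho n d21 = (1 + (-I) ^ n) * (-1 - I) ^ n := by
  have hroots : d21.map (Int.castRingHom ℂ) =
      (({-1 - I, -I * (-1 - I)} : Multiset ℂ).map fun α ↦ X - C α).prod := by
    have hI : (C I : ℂ[X]) ^ 2 = -1 := by rw [← C_pow, I_sq, C_neg, C_1]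
    simp only [d21, Polynomial.map_add, Polynomial.map_mul, Polynomial.map_pow, map_X,
      Polynomial.map_ofNat, Multiset.insert_eq_cons, Multiset.map_cons, Multiset.map_singleton,
      Multiset.prod_cons, Multiset.prod_singleton, C_mul, C_sub, C_neg, C_1]
    linear_combination (X + C I + 2) * hI
  rw [rho_eq_sum_pow hroots, Multiset.insert_eq_cons, Multiset.map_cons, Multiset.sum_cons,
    Multiset.map_singleton, Multiset.sum_singleton, mul_pow]
  ring

lemma rho_d41 {α β : ℂ} (hadd : α + β = -(1 + I)) (hmul : α * β = 2 * I) (n : ℕ) :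
    rho n d41 = (1 + (-I) ^ n) * (α ^ n + β ^ n) := by
  have hroots : d41.map (Int.castRingHom ℂ) =
      (({α, β, -I * α, -I * β} : Multiset ℂ).map fun α ↦ X - C α).prod := by
    have hI : (C I : ℂ[X]) ^ 2 = -1 := by rw [← C_pow, I_sq, C_neg, C_1]
    have hadd' : (C α + C β : ℂ[X]) = -(1 + C I) := by
      rw [← C_add, hadd, C_neg, C_add, C_1]
    have hmul' : (C α * C β : ℂ[X]) = 2 * C I := by rw [← C_mul, hmul, C_mul]; rfl
    calc d41.map (Int.castRingHom ℂ)
      _ = X ^ 4 + 2 * X ^ 3 + 2 * X ^ 2 + 4 * X + 4 := by simp [d41]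
      _ = (X ^ 2 + (1 + C I) * X + 2 * C I) *
            (X ^ 2 - C I * (1 + C I) * X + C I ^ 2 * (2 * C I)) := by
          linear_combination
            (X ^ 3 + (2 - C I) * X ^ 2 - 2 * (C I ^ 2 - 2) * X - 4 * (C I ^ 2 - 1)) * hI
      _ = (X ^ 2 - (C α + C β) * X + C α * C β) *
            (X ^ 2 + C I * (C α + C β) * X + C I ^ 2 * (C α * C β)) := by
          rw [hadd', hmul']; ring
      _ = _ := by
          simp only [Multiset.insert_eq_cons, Multiset.map_cons, Multiset.map_singleton,
            Multiset.prod_cons, Multiset.prod_singleton, C_mul, C_neg]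
          ring
  rw [rho_eq_sum_pow hroots]
  simp only [Multiset.insert_eq_cons, Multiset.map_cons, Multiset.sum_cons,
    Multiset.map_singleton, Multiset.sum_singleton, mul_pow]
  ring

end Roots

section Characters

open Complex (I I_sq)

lemma isPrimitive_zmodChar_I : (AddChar.zmodChar 4 Complex.I_pow_four).IsPrimitive :=
  AddChar.zmodChar_primitive_of_primitive_root 4 Complex.isPrimitiveRoot_I

lemma isPrimitive_zmodChar_neg_one :
    (AddChar.zmodChar 2 (neg_one_sq (R := ℂ))).IsPrimitive :=
  AddChar.zmodChar_primitive_of_primitive_root 2 (IsPrimitiveRoot.neg_one 0 two_ne_zero.symm)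

/-- The character of `ℤ/4 × ℤ/2` with `(1, 0) ↦ I ^ j` and `(0, 1) ↦ (-1) ^ k`. -/
noncomputable def pairChar (j : ZMod 4) (k : ZMod 2) : AddChar (ZMod 4 × ZMod 2) ℂ :=
  ((AddChar.zmodChar 4 Complex.I_pow_four).mulShift j).compAddMonoidHom (AddMonoidHom.fst _ _) *
    ((AddChar.zmodChar 2 neg_one_sq).mulShift k).compAddMonoidHom (AddMonoidHom.snd _ _)

lemma pairChar_apply (j : ZMod 4) (k : ZMod 2) (x : ZMod 4 × ZMod 2) :
    pairChar j k x = I ^ (j * x.1).val * (-1) ^ (k * x.2).val :=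
  rfl

lemma sum_pairChar (x : ZMod 4 × ZMod 2) :
    ∑ j, ∑ k, pairChar j k x = if x = 0 then 8 else 0 := by
  have hsum : ∑ j, ∑ k, pairChar j k x =
      (∑ j, AddChar.zmodChar 4 Complex.I_pow_four (j * x.1)) *
        ∑ k, AddChar.zmodChar (C := ℂ) 2 neg_one_sq (k * x.2) := by
    rw [Finset.sum_mul_sum]
    rfl
  rw [hsum, AddChar.sum_mulShift x.1 isPrimitive_zmodChar_I,
    AddChar.sum_mulShift x.2 isPrimitive_zmodChar_neg_one, ZMod.card, ZMod.card]
  push_cast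
  rw [ite_zero_mul_ite_zero]
  simp only [Prod.ext_iff, Prod.fst_zero, Prod.snd_zero]
  norm_num

lemma pairChar_zero_zero : pairChar 0 0 = 1 := by
  ext x
  simp [pairChar_apply]

lemma pairChar_ne_one {j : ZMod 4} {k : ZMod 2} (h : (j, k) ≠ 0) : pairChar j k ≠ 1 := by
  refine fun hone ↦ h (Prod.ext ?_ ?_)
  · refine not_not.1 fun hj ↦ isPrimitive_zmodChar_I hj ?_
    ext a
    simpa [pairChar_apply, AddChar.zmodChar_apply] using DFunLike.congr_fun hone (a, 0)
  · refine not_not.1 fun hk ↦ isPrimitive_zmodChar_neg_one hk ?_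
    ext b
    simpa [pairChar_apply, AddChar.zmodChar_apply] using DFunLike.congr_fun hone (0, b)

lemma vonMangoldtSum_pairChar {j : ZMod 4} {k : ZMod 2} (h : (j, k) ≠ 0) {α β z s : ℂ}
    (hz : I ^ j.val = z) (hs : (-1) ^ k.val = s) (hadd : α + β = -(1 + z))
    (hmul : α * β = 1 + z + z ^ 2 + z ^ 3 * s) {n : ℕ} (hn : n ≠ 0) :
    vonMangoldtSum (topChar (pairChar j k)) n = -(α ^ n + β ^ n) := by
  have hz' : pairChar j k (1, 0) = z := by simp [pairChar_apply, hz]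
  have hs' : pairChar j k (0, 1) = s := by simp [pairChar_apply, hs]
  refine vonMangoldtSum_topChar_of_ne_one (pairChar_ne_one h) ?_ ?_ hn
  · rw [hadd, hz']
  · rw [hmul, hz', hs']

end Characters

section CharacterSums

open Complex (I I_sq)

variable {n : ℕ}

lemma exists_add_eq_mul_eq {k : Type*} [Field k] [IsAlgClosed k] (u v : k) :
    ∃ α β : k, α + β = u ∧ α * β = v := by
  have hdeg : (X ^ 2 - C u * X + C v : k[X]).degree = 2 := by compute_degree!
  obtain ⟨α, hα⟩ := IsAlgClosed.exists_root (X ^ 2 - C u * X + C v)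
    (by rw [hdeg]; exact two_ne_zero)
  refine ⟨α, u - α, add_sub_cancel α u, ?_⟩
  simp only [IsRoot, eval_add, eval_sub, eval_mul, eval_pow, eval_C, eval_X] at hα
  linear_combination -hα

lemma vonMangoldtSum_pairChar_zero_one (hn : n ≠ 0) :
    vonMangoldtSum (topChar (pairChar 0 1)) n = -rho n d21 := by
  have hconj : -1 - I + -I * (-1 - I) = -(1 + 1) := by linear_combination I_sq
  have hnorm : (-1 - I) * (-I * (-1 - I)) = 1 + 1 + 1 ^ 2 + 1 ^ 3 * -1 := by
    linear_combination (-2 - I) * I_sq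
  rw [vonMangoldtSum_pairChar (j := 0) (k := 1) (by decide) (pow_zero I) (pow_one (-1)) hconj
    hnorm hn, rho_d21, mul_pow]
  ring

lemma vonMangoldtSum_pairChar_one_zero (hn : n ≠ 0) :
    vonMangoldtSum (topChar (pairChar 1 0)) n = -(-1 - I) ^ n := by
  have hmul : (-1 - I) * 0 = 1 + I + I ^ 2 + I ^ 3 * 1 := by
    linear_combination -(1 + I) * I_sq
  rw [vonMangoldtSum_pairChar (j := 1) (k := 0) (by decide) (pow_one I) (pow_zero (-1)) (by ring)
    hmul hn, zero_pow hn, add_zero]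

lemma vonMangoldtSum_pairChar_three_zero (hn : n ≠ 0) :
    vonMangoldtSum (topChar (pairChar 3 0)) n = -((-I) ^ n * (-1 - I) ^ n) := by
  have hadd : -I * (-1 - I) + 0 = -(1 + -I) := by linear_combination I_sq
  have hmul : -I * (-1 - I) * 0 = 1 + -I + (-I) ^ 2 + (-I) ^ 3 * 1 := by
    linear_combination -(1 - I) * I_sq
  rw [vonMangoldtSum_pairChar (j := 3) (k := 0) (by decide) Complex.I_pow_three
    (pow_zero (-1)) hadd hmul hn, zero_pow hn, add_zero, mul_pow]

lemma vonMangoldtSum_pairChar_two (hodd : Odd n) (k : ZMod 2) :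
    vonMangoldtSum (topChar (pairChar 2 k)) n = 0 := by
  have hne : ((2 : ZMod 4), k) ≠ 0 := by decide +revert
  obtain ⟨α, β, hadd, hmul⟩ := exists_add_eq_mul_eq (0 : ℂ) (1 - (-1) ^ k.val)
  rw [vonMangoldtSum_pairChar hne (z := -1) I_sq rfl (by rw [hadd, add_neg_cancel, neg_zero])
    (by rw [hmul]; ring) hodd.pos.ne', eq_neg_of_add_eq_zero_right hadd, hodd.neg_pow,
    add_neg_cancel, neg_zero]

lemma vonMangoldtSum_pairChar_one_one {α β : ℂ} (hadd : α + β = -(1 + I)) (hmul : α * β = 2 * I)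
    (hn : n ≠ 0) : vonMangoldtSum (topChar (pairChar 1 1)) n = -(α ^ n + β ^ n) :=
  vonMangoldtSum_pairChar (j := 1) (k := 1) (by decide) (pow_one I) (pow_one (-1)) hadd
    (by linear_combination hmul - (1 - I) * I_sq) hn

lemma vonMangoldtSum_pairChar_three_one {α β : ℂ} (hadd : α + β = -(1 + I))
    (hmul : α * β = 2 * I) (hn : n ≠ 0) :
    vonMangoldtSum (topChar (pairChar 3 1)) n = -((-I) ^ n * (α ^ n + β ^ n)) := by
  have hadd' : -I * α + -I * β = -(1 + -I) := by linear_combination -I * hadd + I_sq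
  have hmul' : -I * α * (-I * β) = 1 + -I + (-I) ^ 2 + (-I) ^ 3 * -1 := by
    linear_combination I ^ 2 * hmul + (I - 1) * I_sq
  rw [vonMangoldtSum_pairChar (j := 3) (k := 1) (by decide) Complex.I_pow_three
    (pow_one (-1)) hadd' hmul' hn, mul_pow, mul_pow, mul_add]

end CharacterSums

section Counting

open Complex (I I_sq)

lemma pairChar_eq_pow_mul_pow (j : ZMod 4) (k : ZMod 2) (x : ZMod 4 × ZMod 2) :
    pairChar j k x = (I ^ x.1.val) ^ j.val * ((-1) ^ x.2.val) ^ k.val := by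
  rw [pairChar_apply, ZMod.val_mul, ZMod.val_mul, ← pow_eq_pow_mod _ Complex.I_pow_four,
    ← pow_eq_pow_mod _ neg_one_sq, pow_mul', pow_mul']

lemma pairChar_neg_unitLog (j : ZMod 4) (k t₁ t₂ t₃ : ZMod 2) :
    pairChar j k (-unitLog (t₁, t₂, t₃)) =
      ((-I) ^ t₁.val * (-1) ^ t₂.val) ^ j.val * ((-1) ^ (t₃ + t₁ * t₂).val) ^ k.val := by
  have hfst : (-unitLog (t₁, t₂, t₃)).1.val = (3 * t₁.val + 2 * t₂.val) % 4 := by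
    decide +revert
  have hsnd : (-unitLog (t₁, t₂, t₃)).2 = t₃ + t₁ * t₂ := by decide +revert
  rw [pairChar_eq_pow_mul_pow, hfst, hsnd, ← pow_eq_pow_mod _ Complex.I_pow_four, pow_add,
    pow_mul, pow_mul, Complex.I_pow_three, I_sq]

lemma neg_I_pow_mul_add_pow_three_mul {n : ℕ} (hodd : Odd n) (t : ZMod 2) {s : ℂ}
    (hs : s ^ 2 = 1) :
    (-I) ^ t.val * s + ((-I) ^ t.val * s) ^ 3 * (-I) ^ n =
      (-1) ^ (t.val * (n / 2)) * s * (1 + (-I) ^ n) := by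
  obtain ⟨m, rfl⟩ := hodd
  have hI : (-I) ^ (2 * m + 1) = (-1) ^ m * -I := by rw [pow_succ, pow_mul, neg_sq, I_sq]
  have hm : ((-1 : ℂ) ^ m) ^ 2 = 1 := by rw [← pow_mul', pow_mul, neg_one_sq, one_pow]
  have hhalf : (2 * m + 1) / 2 = m := by omega
  have hbit : t = 0 ∨ t = 1 := by decide +revert
  rw [hI, hhalf]
  obtain rfl | rfl := hbit
  · rw [ZMod.val_zero, pow_zero, zero_mul, pow_zero]
    linear_combination -s * (-1) ^ m * I * hs
  · rw [ZMod.val_one, pow_one, one_mul]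
    linear_combination s ^ 3 * (-1) ^ m * (I ^ 2 - 1) * I_sq + s * (-1) ^ m * hs + s * I * hm

section CharacterExpansion

variable {K : Type*} [Field K] [Finite K] [Algebra (ZMod 2) K]

lemma vonMangoldtSum_topChar_one (R : Type*) [CommRing R] :
    vonMangoldtSum (topChar (1 : AddChar (ZMod 4 × ZMod 2) R)) (Module.finrank (ZMod 2) K) =
      2 ^ Module.finrank (ZMod 2) K := by
  have hone (a : K) :
      topChar (1 : AddChar (ZMod 4 × ZMod 2) R) (fieldPolynomial (ZMod 2) a) = 1 :=
    topChar_apply 1 (monic_fieldPolynomial (ZMod 2) a).ne_zero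
  have := Fintype.ofFinite K
  rw [← sum_fieldPolynomial_eq_vonMangoldtSum, Finset.sum_congr rfl fun a _ ↦ hone a,
    Finset.sum_const, Finset.card_univ, nsmul_one, Module.card_eq_pow_finrank (K := ZMod 2),
    ZMod.card, Nat.cast_pow, Nat.cast_ofNat]

lemma eight_mul_card_eq_sum_pairChar (x : ZMod 4 × ZMod 2) :
    8 * (Nat.card {a : K // truncLog (fieldPolynomial (ZMod 2) a).reverse = x} : ℂ) =
      ∑ j, ∑ k, pairChar j k (-x) *
        vonMangoldtSum (topChar (pairChar j k)) (Module.finrank (ZMod 2) K) := by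
  have := Fintype.ofFinite K
  have horth (a : K) :
      ∑ j, ∑ k, pairChar j k (-x) * topChar (pairChar j k) (fieldPolynomial (ZMod 2) a) =
        if truncLog (fieldPolynomial (ZMod 2) a).reverse = x then 8 else 0 := by
    simp only [topChar_apply _ (monic_fieldPolynomial (ZMod 2) a).ne_zero, ← AddChar.map_add_eq_mul,
      sum_pairChar, neg_add_eq_zero, eq_comm (a := x)]
  calc 8 * (Nat.card {a : K // truncLog (fieldPolynomial (ZMod 2) a).reverse = x} : ℂ)
    _ = ∑ a : K, ∑ j, ∑ k,
          pairChar j k (-x) * topChar (pairChar j k) (fieldPolynomial (ZMod 2) a) := by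
        rw [Finset.sum_congr rfl fun a _ ↦ horth a, Finset.sum_ite, Finset.sum_const_zero,
          Finset.sum_const, nsmul_eq_mul, add_zero, Nat.card_eq_fintype_card,
          Fintype.card_subtype, mul_comm]
    _ = ∑ j, ∑ k, ∑ a : K,
          pairChar j k (-x) * topChar (pairChar j k) (fieldPolynomial (ZMod 2) a) := by
        rw [Finset.sum_comm]
        exact Finset.sum_congr rfl fun j _ ↦ Finset.sum_comm
    _ = _ := by simp only [← Finset.mul_sum, sum_fieldPolynomial_eq_vonMangoldtSum]

end CharacterExpansion

variable {K : Type} [Field K] [Fintype K] [Algebra (ZMod 2) K]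

lemma cnt3_algebraMap {n : ℕ} (hn : 3 ≤ n) (hK : Module.finrank (ZMod 2) K = n)
    (t1 t2 t3 : ZMod 2) :
    cnt3 n K (algebraMap _ K t1) (algebraMap _ K t2) (algebraMap _ K t3) =
      Nat.card {a : K // truncLog (fieldPolynomial (ZMod 2) a).reverse = unitLog (t1, t2, t3)} := by
  subst hK
  have : CharP K 2 := charP_of_injective_algebraMap (algebraMap (ZMod 2) K).injective 2
  refine Nat.card_congr (Equiv.subtypeEquivRight fun a ↦ ?_)
  have htrace (k : ℕ) (hk : k ≤ 3) (t : ZMod 2) :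
      traceFn 2 (Module.finrank (ZMod 2) K) k a = algebraMap _ K t ↔
        (fieldPolynomial (ZMod 2) a).reverse.coeff k = t := by
    have h := algebraMap_coeff_reverse_fieldPolynomial (ZMod 2) a (hk.trans hn)
    rw [ZMod.card, CharTwo.neg_eq, one_pow, one_mul] at h
    rw [← h, (algebraMap (ZMod 2) K).injective.eq_iff]
  rw [htrace 1 (by norm_num), htrace 2 (by norm_num), htrace 3 le_rfl, truncLog,
    unitLog_bijective.injective.eq_iff, Prod.mk.injEq, Prod.mk.injEq]

lemma eight_mul_cnt3 {n : ℕ} (hn : 3 ≤ n) (hodd : Odd n) (hK : Module.finrank (ZMod 2) K = n)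
    (t₁ t₂ t₃ : ZMod 2) (δ ε : ℂ) (hδ : (-1) ^ (t₁.val * (n / 2)) * (-1) ^ t₂.val = δ)
    (hε : (-1) ^ (t₃ + t₁ * t₂).val = ε) :
    8 * (cnt3 n K (algebraMap _ K t₁) (algebraMap _ K t₂) (algebraMap _ K t₃) : ℂ) =
      2 ^ n - ((δ + ε) * rho n d21 + δ * ε * rho n d41) := by
  obtain ⟨α, β, hadd, hmul⟩ := exists_add_eq_mul_eq (-(1 + I)) (2 * I)
  have hn0 : n ≠ 0 := hodd.pos.ne'
  have htriv : vonMangoldtSum (topChar (1 : AddChar (ZMod 4 × ZMod 2) ℂ)) n = 2 ^ n :=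
    hK ▸ vonMangoldtSum_topChar_one (K := K) ℂ
  have hsign : (-I) ^ t₁.val * (-1) ^ t₂.val + ((-I) ^ t₁.val * (-1) ^ t₂.val) ^ 3 * (-I) ^ n =
      δ * (1 + (-I) ^ n) := by
    have hsq : ((-1 : ℂ) ^ t₂.val) ^ 2 = 1 := by rw [pow_right_comm, neg_one_sq, one_pow]
    rw [← hδ, neg_I_pow_mul_add_pow_three_mul hodd t₁ hsq]
  have hval₁ : (1 : ZMod 4).val = 1 := rfl
  have hval₃ : (3 : ZMod 4).val = 3 := rfl
  have hsum (φ : ZMod 4 → ℂ) : ∑ j, φ j = φ 0 + φ 1 + φ 2 + φ 3 := Fin.sum_univ_four φ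
  rw [cnt3_algebraMap hn hK, eight_mul_card_eq_sum_pairChar, hK, hsum]
  simp only [sum_zmod_two, pairChar_zero_zero, htriv,
    vonMangoldtSum_pairChar_zero_one hn0, vonMangoldtSum_pairChar_one_zero hn0,
    vonMangoldtSum_pairChar_three_zero hn0, vonMangoldtSum_pairChar_two hodd,
    vonMangoldtSum_pairChar_one_one hadd hmul hn0,
    vonMangoldtSum_pairChar_three_one hadd hmul hn0, rho_d41 hadd hmul, rho_d21]
  simp only [pairChar_neg_unitLog, AddChar.one_apply, hε, ZMod.val_zero, ZMod.val_one, hval₁,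
    hval₃, pow_zero, pow_one, one_mul, mul_one]
  linear_combination -((-1 - I) ^ n + ε * (α ^ n + β ^ n)) * hsign

lemma cnt3_eq {n : ℕ} (hn : 3 ≤ n) (hodd : Odd n) (hK : Module.finrank (ZMod 2) K = n)
    (t₁ t₂ t₃ : ZMod 2) (δ ε : ℂ) (hδ : (-1) ^ (t₁.val * (n / 2)) * (-1) ^ t₂.val = δ)
    (hε : (-1) ^ (t₃ + t₁ * t₂).val = ε) :
    (cnt3 n K (algebraMap _ K t₁) (algebraMap _ K t₂) (algebraMap _ K t₃) : ℂ) =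
      2 ^ (n - 3) - (1 / 8) * ((δ + ε) * rho n d21 + δ * ε * rho n d41) := by
  have hpow : (2 : ℂ) ^ n = 2 ^ (n - 3) * 2 ^ 3 := (pow_sub_mul_pow 2 hn).symm
  linear_combination (eight_mul_cnt3 hn hodd hK t₁ t₂ t₃ δ ε hδ hε + hpow) / 8

end Counting

theorem statement11 (n : ℕ) (hn : 3 ≤ n) (hodd : Odd n)
    (K : Type) [Field K] [Fintype K] (hK : Fintype.card K = 2 ^ n) :
    ((cnt3 n K 0 0 0 : ℂ) = 2 ^ (n - 3) - (1 / 8) * (2 * rho n d21 + rho n d41)) ∧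
    ((cnt3 n K 0 1 0 : ℂ) = 2 ^ (n - 3) + (1 / 8) * rho n d41) ∧
    ((cnt3 n K 0 0 1 : ℂ) = 2 ^ (n - 3) + (1 / 8) * rho n d41) ∧
    ((cnt3 n K 0 1 1 : ℂ) = 2 ^ (n - 3) - (1 / 8) * (-2 * rho n d21 + rho n d41)) ∧
    (n % 4 = 1 →
      ((cnt3 n K 1 0 0 : ℂ) = 2 ^ (n - 3) - (1 / 8) * (2 * rho n d21 + 1 * rho n d41)) ∧
      ((cnt3 n K 1 1 0 : ℂ) = 2 ^ (n - 3) - (1 / 8) * (-2 * rho n d21 + 1 * rho n d41)) ∧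
      ((cnt3 n K 1 0 1 : ℂ) = 2 ^ (n - 3) - (1 / 8) * (0 * rho n d21 + (-1) * rho n d41)) ∧
      ((cnt3 n K 1 1 1 : ℂ) = 2 ^ (n - 3) - (1 / 8) * (0 * rho n d21 + (-1) * rho n d41))) ∧
    (n % 4 = 3 →
      ((cnt3 n K 1 0 0 : ℂ) = 2 ^ (n - 3) - (1 / 8) * (0 * rho n d21 + (-1) * rho n d41)) ∧
      ((cnt3 n K 1 1 0 : ℂ) = 2 ^ (n - 3) - (1 / 8) * (0 * rho n d21 + (-1) * rho n d41)) ∧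
      ((cnt3 n K 1 0 1 : ℂ) = 2 ^ (n - 3) - (1 / 8) * (-2 * rho n d21 + 1 * rho n d41)) ∧
      ((cnt3 n K 1 1 1 : ℂ) = 2 ^ (n - 3) - (1 / 8) * (2 * rho n d21 + 1 * rho n d41))) := by
  have : CharP K 2 := charP_of_card_eq_prime_pow hK
  let := ZMod.algebra K 2
  have hrank : Module.finrank (ZMod 2) K = n := by
    rw [Module.card_eq_pow_finrank (K := ZMod 2), ZMod.card] at hK
    exact Nat.pow_right_injective le_rfl hK
  have key := cnt3_eq hn hodd hrank
  rw [← map_zero (algebraMap (ZMod 2) K), ← map_one (algebraMap (ZMod 2) K)]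
  have hval : (1 : ZMod 2).val = 1 := rfl
  refine ⟨(key 0 0 0 1 1 (by simp) (pow_zero _)).trans (by ring),
    (key 0 1 0 (-1) 1 (by simp [hval]) (pow_zero _)).trans (by ring),
    (key 0 0 1 1 (-1) (by simp) (pow_one _)).trans (by ring),
    (key 0 1 1 (-1) (-1) (by simp [hval]) (pow_one _)).trans (by ring), fun h ↦ ?_, fun h ↦ ?_⟩
  · have hη : (-1 : ℂ) ^ (n / 2) = 1 := Even.neg_one_pow (Nat.even_iff.2 (by omega))
    exact ⟨(key 1 0 0 1 1 (by simp [hval, hη]) (pow_zero _)).trans (by ring),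
      (key 1 1 0 (-1) (-1) (by simp [hval, hη]) (pow_one _)).trans (by ring),
      (key 1 0 1 1 (-1) (by simp [hval, hη]) (pow_one _)).trans (by ring),
      (key 1 1 1 (-1) 1 (by simp [hval, hη]) (pow_zero _)).trans (by ring)⟩
  · have hη : (-1 : ℂ) ^ (n / 2) = -1 := Odd.neg_one_pow (Nat.odd_iff.2 (by omega))
    exact ⟨(key 1 0 0 (-1) 1 (by simp [hval, hη]) (pow_zero _)).trans (by ring),
      (key 1 1 0 1 (-1) (by simp [hval, hη]) (pow_one _)).trans (by ring),
      (key 1 0 1 (-1) (-1) (by simp [hval, hη]) (pow_one _)).trans (by ring),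
      (key 1 1 1 1 1 (by simp [hval, hη]) (pow_zero _)).trans (by ring)⟩
end
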